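/- arXiv:2404.17678 — 2 statements merged into one kernel-verified Lean document; each statement's English description precedes it below -/
import Mathlib

section
/- Let a ∈ ℂ be such that a is not a nonzero integer, and assume none of the numbers a/2 + 5/8, a/2 + 7/8, −a/2 + 5/8, −a/2 + 7/8 is a nonpositive integer. Then _3F_3[1/2, 1/2 + a, 1/2 − a; 1, 1 + a, 1 − a | −1] = π · Γ(1 + a) Γ(1 − a) / ( √2 · Γ(a/2 + 5/8) Γ(a/2 + 7/8) Γ(−a/2 + 5/8) Γ(−a/2 + 7/8) ), the series on the left converging. -/
open Complex

/-- The `k`-th coefficient of the classical generalized hypergeometric series with upper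
parameters `a` and lower parameters `b` (indexed by a finite type `ι`):
`(∏ᵢ (aᵢ)ₖ) / (∏ᵢ (bᵢ)ₖ)` where `(x)ₖ` is the Pochhammer (rising factorial) symbol. -/
noncomputable def hypCoeff {ι : Type} [Fintype ι] (a b : ι → ℂ) (k : ℕ) : ℂ :=
  (∏ i, (ascPochhammer ℂ k).eval (a i)) / (∏ i, (ascPochhammer ℂ k).eval (b i))

/-- The classical generalized hypergeometric series `ₘFₘ[a ; b | z]`. -/
noncomputable def cHyp {ι : Type} [Fintype ι] (a b : ι → ℂ) (z : ℂ) : ℂ :=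
  ∑' k : ℕ, hypCoeff a b k * z ^ k

/-- A complex number is a nonpositive integer, i.e. lies in `{0, -1, -2, …}`. -/
def IsNonposInt (z : ℂ) : Prop := ∃ k : ℕ, z = -(k : ℂ)

/-!
Let `S(A, b, d)` be the very-well-poised `₆F₅` at `-1` whose numerator parameters, besides `A` and
`1 + A / 2`, are `b, 1 - b, d, 1 - d`. The series of the theorem is `S(1/2, 1/2 + a, 1/4)`, since
the Pochhammer symbols of `1/4`, `3/4` and `5/4` cancel.

The difference `S(A, b, d) - r S(A + 1, b + 1, d)` telescopes to zero for an explicit rational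
`r = contigFactor A b d`. Because `S` is symmetric under `b ↦ 1 - b`, two such steps raise `A` by
`2` and leave `b` unchanged. Hence `S(A, b, d)` is a quotient of Pochhammer symbols of length `N`
times `S(A + 2 N, b, d)`. As `N → ∞` the last factor tends to `1`, because every term but the first
vanishes in the limit, and the quotient tends to a quotient of Gamma values, which the duplication
formula simplifies.
-/

open Filter Topology Asymptotics

lemma add_natCast_ne_zero {z : ℂ} (hz : ¬ IsNonposInt z) (n : ℕ) : z + n ≠ 0 :=
  fun h => hz ⟨n, eq_neg_of_add_eq_zero_left h⟩

lemma ne_zero_of_not_isNonposInt {z : ℂ} (hz : ¬ IsNonposInt z) : z ≠ 0 := by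
  simpa using add_natCast_ne_zero hz 0

lemma not_isNonposInt_add_natCast {z : ℂ} (hz : ¬ IsNonposInt z) (n : ℕ) :
    ¬ IsNonposInt (z + n) := by
  rintro ⟨k, hk⟩
  exact hz ⟨k + n, by push_cast; linear_combination hk⟩

lemma not_isNonposInt_of_re_pos {z : ℂ} (hz : 0 < z.re) : ¬ IsNonposInt z := by
  rintro ⟨k, rfl⟩
  simp only [neg_re, natCast_re] at hz
  linarith [k.cast_nonneg (α := ℝ)]

lemma not_isNonposInt_div_two {z : ℂ} (hz : ¬ IsNonposInt z) : ¬ IsNonposInt (z / 2) := by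
  rintro ⟨k, hk⟩
  exact hz ⟨2 * k, by push_cast; linear_combination 2 * hk⟩

lemma not_isNonposInt_add_one_div_two {z : ℂ} (hz : ¬ IsNonposInt z) :
    ¬ IsNonposInt ((z + 1) / 2) :=
  not_isNonposInt_div_two (by simpa using not_isNonposInt_add_natCast hz 1)

lemma ascPochhammer_eval_ne_zero {z : ℂ} (hz : ¬ IsNonposInt z) (n : ℕ) :
    (ascPochhammer ℂ n).eval z ≠ 0 := by
  rw [ne_eq, ascPochhammer_eval_eq_zero_iff]
  rintro ⟨k, -, hk⟩
  exact hz ⟨k, by rw [hk, neg_neg]⟩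

lemma ascPochhammer_eval_eq_prod_range {R : Type*} [CommSemiring R] (r : R) (n : ℕ) :
    (ascPochhammer R n).eval r = ∏ j ∈ Finset.range n, (r + j) := by
  induction n with
  | zero => simp
  | succ n ih => rw [ascPochhammer_succ_eval, ih, Finset.prod_range_succ]

lemma ascPochhammer_succ_eval_left {R : Type*} [CommSemiring R] (r : R) (n : ℕ) :
    (ascPochhammer R (n + 1)).eval r = r * (ascPochhammer R n).eval (r + 1) := by
  simp [ascPochhammer_succ_left]

lemma ascPochhammer_eval_one_add_div {z : ℂ} (hz : ¬ IsNonposInt z) (n : ℕ) :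
    (ascPochhammer ℂ n).eval (1 + z) / (ascPochhammer ℂ n).eval z = (z + n) / z := by
  rw [div_eq_div_iff (ascPochhammer_eval_ne_zero hz n) (ne_zero_of_not_isNonposInt hz),
    mul_comm, add_comm 1 z, ← ascPochhammer_succ_eval_left, ascPochhammer_succ_eval, mul_comm]

lemma inv_ascPochhammer_succ_eval {z : ℂ} (hz : ¬ IsNonposInt z) (n : ℕ) :
    ((ascPochhammer ℂ (n + 1)).eval z)⁻¹ =
      (z + n + 1) / (z * (z + 1) * (ascPochhammer ℂ n).eval (z + 2)) := by
  have h := ascPochhammer_succ_eval (n + 1) z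
  have h2 : z + 1 + 1 = z + 2 := by ring
  rw [ascPochhammer_succ_eval_left, ascPochhammer_succ_eval_left, h2] at h
  push_cast at h
  rw [mul_assoc, h, ← add_assoc, mul_comm, div_mul_cancel_left₀]
  simpa [add_assoc] using add_natCast_ne_zero hz (n + 1)

section GammaAsymptotics

lemma tendsto_inv_GammaSeq (z : ℂ) :
    Tendsto (fun n => (GammaSeq z n)⁻¹) atTop (𝓝 (Gamma z)⁻¹) := by
  by_cases hz : IsNonposInt z
  · obtain ⟨m, rfl⟩ := hz
    rw [Gamma_neg_nat_eq_zero, inv_zero]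
    refine tendsto_const_nhds.congr' ?_
    filter_upwards [eventually_ge_atTop m] with n hn
    have : ∏ j ∈ Finset.range (n + 1), (-(m : ℂ) + j) = 0 :=
      Finset.prod_eq_zero (Finset.mem_range_succ_iff.2 hn) (neg_add_cancel _)
    rw [GammaSeq, this, div_zero, inv_zero]
  · exact (GammaSeq_tendsto_Gamma z).inv₀ (Gamma_ne_zero fun m hm => hz ⟨m, hm⟩)

lemma tendsto_ascPochhammer_eval_mul (z : ℂ) :
    Tendsto (fun n : ℕ => (ascPochhammer ℂ n).eval z * (n / ((n : ℂ) ^ z * n.factorial))) atTop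
      (𝓝 (Gamma z)⁻¹) := by
  have h := (tendsto_inv_GammaSeq z).mul (tendsto_natCast_div_add_atTop z)
  rw [mul_one] at h
  have hne : ∀ᶠ n : ℕ in atTop, (n : ℂ) + z ≠ 0 := by
    filter_upwards [(tendsto_natCast_div_add_atTop z).eventually_ne one_ne_zero] with n hn h0
    exact hn (by rw [h0, div_zero])
  refine h.congr' ?_
  filter_upwards [hne] with n hn
  have hn' : z + n ≠ 0 := by rwa [add_comm]
  rw [GammaSeq, Finset.prod_range_succ, ← ascPochhammer_eval_eq_prod_range, inv_div,
    add_comm (n : ℂ) z]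
  field_simp

variable {ι : Type} [Fintype ι] {a b : ι → ℂ}

lemma prod_cpow_eq_cpow_sum {x : ℂ} (hx : x ≠ 0) (s : ι → ℂ) : ∏ i, x ^ s i = x ^ ∑ i, s i := by
  simp only [cpow_def_of_ne_zero hx, Finset.mul_sum, exp_sum]

lemma tendsto_hypCoeff_mul_cpow (hb : ∀ i, ¬ IsNonposInt (b i)) :
    Tendsto (fun n : ℕ => hypCoeff a b n * (n : ℂ) ^ (∑ i, b i - ∑ i, a i)) atTop
      (𝓝 ((∏ i, Gamma (b i)) / ∏ i, Gamma (a i))) := by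
  have hlim : Tendsto (fun n : ℕ =>
      (∏ i, (ascPochhammer ℂ n).eval (a i) * (n / ((n : ℂ) ^ a i * n.factorial))) /
        ∏ i, (ascPochhammer ℂ n).eval (b i) * (n / ((n : ℂ) ^ b i * n.factorial))) atTop
      (𝓝 ((∏ i, (Gamma (a i))⁻¹) / ∏ i, (Gamma (b i))⁻¹)) :=
    (tendsto_finsetProd _ fun i _ => tendsto_ascPochhammer_eval_mul (a i)).div
      (tendsto_finsetProd _ fun i _ => tendsto_ascPochhammer_eval_mul (b i))
      (Finset.prod_ne_zero_iff.2 fun i _ =>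
        inv_ne_zero (Gamma_ne_zero fun m hm => hb i ⟨m, hm⟩))
  simp only [Finset.prod_inv_distrib, inv_div_inv] at hlim
  refine hlim.congr' ?_
  filter_upwards [eventually_ne_atTop 0] with n hn
  have hn : (n : ℂ) ≠ 0 := Nat.cast_ne_zero.2 hn
  have hf : (n.factorial : ℂ) ≠ 0 := Nat.cast_ne_zero.2 n.factorial_ne_zero
  simp only [hypCoeff, Finset.prod_mul_distrib, Finset.prod_div_distrib, Finset.prod_const,
    prod_cpow_eq_cpow_sum hn, cpow_sub _ _ hn]
  field_simp

lemma tendsto_hypCoeff (hb : ∀ i, ¬ IsNonposInt (b i)) (hab : ∑ i, a i = ∑ i, b i) :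
    Tendsto (hypCoeff a b) atTop (𝓝 ((∏ i, Gamma (b i)) / ∏ i, Gamma (a i))) := by
  simpa [hab] using tendsto_hypCoeff_mul_cpow (a := a) hb

lemma hypCoeff_isBigO (hb : ∀ i, ¬ IsNonposInt (b i)) :
    hypCoeff a b =O[atTop] fun n : ℕ => (n : ℝ) ^ (∑ i, a i - ∑ i, b i).re := by
  have h := ((tendsto_hypCoeff_mul_cpow (a := a) hb).isBigO_one ℂ).mul
    (isBigO_refl (fun n : ℕ => (n : ℂ) ^ (∑ i, a i - ∑ i, b i)) atTop)
  refine (h.congr' ?_ .rfl).trans (.of_norm_eventuallyLE ?_)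
  · filter_upwards [eventually_ne_atTop 0] with n hn
    rw [mul_assoc, ← cpow_add _ _ (Nat.cast_ne_zero.2 hn)]
    simp
  · filter_upwards [eventually_gt_atTop 0] with n hn
    simp [norm_natCast_cpow_of_pos hn]

lemma summable_hypCoeff_mul_pow (hb : ∀ i, ¬ IsNonposInt (b i))
    (hab : 1 < (∑ i, b i - ∑ i, a i).re) {z : ℂ} (hz : ‖z‖ ≤ 1) :
    Summable fun n => hypCoeff a b n * z ^ n := by
  have hpow : (fun n : ℕ => z ^ n) =O[atTop] fun _ => (1 : ℝ) :=
    .of_norm_eventuallyLE (.of_forall fun n => by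
      simpa using pow_le_one₀ (norm_nonneg z) hz)
  have hs : (∑ i, a i - ∑ i, b i).re < -1 := by
    rw [← neg_sub, neg_re]; linarith
  exact summable_of_isBigO_nat (Real.summable_nat_rpow.2 hs)
    (by simpa using (hypCoeff_isBigO (a := a) hb).mul hpow)

end GammaAsymptotics

section Recurrences

variable {ι : Type} [Fintype ι] (a b : ι → ℂ)

lemma hypCoeff_zero : hypCoeff a b 0 = 1 := by simp [hypCoeff]

lemma hypCoeff_eq_prod_div (n : ℕ) :
    hypCoeff a b n = ∏ i, (ascPochhammer ℂ n).eval (a i) / (ascPochhammer ℂ n).eval (b i) :=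
  (Finset.prod_div_distrib ..).symm

lemma hypCoeff_eq_prod_range (n : ℕ) :
    hypCoeff a b n = ∏ j ∈ Finset.range n, ∏ i, (a i + j) / (b i + j) := by
  simp only [hypCoeff, ascPochhammer_eval_eq_prod_range, Finset.prod_div_distrib]
  congr 1 <;> exact Finset.prod_comm

lemma hypCoeff_succ (n : ℕ) :
    hypCoeff a b (n + 1) = hypCoeff a b n * ∏ i, (a i + n) / (b i + n) := by
  rw [hypCoeff_eq_prod_range, Finset.prod_range_succ, ← hypCoeff_eq_prod_range]

end Recurrences

section GammaValues

lemma ofReal_sqrt_mul_self {x : ℝ} (hx : 0 ≤ x) : ((√x : ℝ) : ℂ) * (√x : ℝ) = x := by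
  rw [← ofReal_mul, Real.mul_self_sqrt hx]

lemma Gamma_half_mul_Gamma_add_one_half (z : ℂ) :
    Gamma (z / 2) * Gamma ((z + 1) / 2) = Gamma z * 2 ^ (1 - z) * √Real.pi := by
  simpa [add_div, mul_div_cancel₀] using Gamma_mul_Gamma_add_half (z / 2)

lemma Gamma_halves_mul_Gamma_halves (z w : ℂ) :
    Gamma (z / 2) * Gamma ((z + 1) / 2) * (Gamma (w / 2) * Gamma ((w + 1) / 2)) =
      Real.pi * 2 ^ (2 - (z + w)) * (Gamma z * Gamma w) := by
  have hpow : (2 : ℂ) ^ (2 - (z + w)) = 2 ^ (1 - z) * 2 ^ (1 - w) := by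
    rw [← cpow_add _ _ two_ne_zero]
    ring_nf
  rw [Gamma_half_mul_Gamma_add_one_half, Gamma_half_mul_Gamma_add_one_half, hpow]
  linear_combination (2 ^ (1 - z) * 2 ^ (1 - w) * (Gamma z * Gamma w)) *
    ofReal_sqrt_mul_self Real.pi_pos.le

lemma Gamma_one_fourth_mul_Gamma_three_fourths :
    Gamma (1 / 4) * Gamma (3 / 4) = Real.pi * (√2 : ℝ) := by
  have hsin : sin (Real.pi * (1 / 4)) = (√2 / 2 : ℝ) := by
    rw [← Real.sin_pi_div_four, ofReal_sin]
    push_cast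
    ring_nf
  have hrefl := Gamma_mul_Gamma_one_sub (1 / 4)
  rw [hsin] at hrefl
  have hsub : (1 - 1 / 4 : ℂ) = 3 / 4 := by norm_num
  have hsqrt := ofReal_sqrt_mul_self zero_le_two
  rw [ofReal_ofNat] at hsqrt
  rw [← hsub, hrefl, div_eq_iff (by simp)]
  push_cast
  linear_combination -(Real.pi / 2 : ℂ) * hsqrt

lemma Gamma_three_fourths_mul_Gamma_five_fourths :
    Gamma (3 / 4) * Gamma (5 / 4) = Gamma (1 / 2) * Gamma (3 / 2) / (√2 : ℝ) := by
  have h₅ : Gamma (5 / 4) = 1 / 4 * Gamma (1 / 4) := by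
    rw [← Gamma_add_one _ (by norm_num)]
    norm_num
  have h₃ : Gamma (3 / 2) = 1 / 2 * Gamma (1 / 2) := by
    rw [← Gamma_add_one _ (by norm_num)]
    norm_num
  have hhalf : Gamma (1 / 2) * Gamma (1 / 2) = Real.pi := by
    rw [Gamma_one_half_eq, ← cpow_add _ _ (ofReal_ne_zero.2 Real.pi_ne_zero), add_halves, cpow_one]
  have hsqrt := ofReal_sqrt_mul_self zero_le_two
  rw [ofReal_ofNat] at hsqrt
  rw [h₅, h₃, eq_div_iff (by simp)]
  linear_combination (√2 : ℝ) / 4 * Gamma_one_fourth_mul_Gamma_three_fourths - hhalf / 2 +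
    Real.pi / 4 * hsqrt

end GammaValues

/-- Upper parameters of the series, very well poised in `A`, whose numerator parameters come in the
pairs `b, 1 - b` and `d, 1 - d`. The leading pair `A, 1 + A/2` is matched with the pair `1, A/2` of
`vwpLower`, in which the lower parameter `1` is the factorial. -/
noncomputable def vwpUpper (A b d : ℂ) : Fin 6 → ℂ := ![A, 1 + A / 2, b, 1 - b, d, 1 - d]

/-- Lower parameters of the very-well-poised series with upper parameters `vwpUpper A b d`, paired
entrywise with them. -/
noncomputable def vwpLower (A b d : ℂ) : Fin 6 → ℂ :=
  ![1, A / 2, 1 + A - b, A + b, 1 + A - d, A + d]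

section VeryWellPoised

variable {A b d : ℂ}

/-- The parameters for which the very-well-poised series at `-1` converges absolutely and has no
vanishing denominator. -/
structure VwpRegular (A b d : ℂ) : Prop where
  one_third_lt_re : 1 / 3 < A.re
  sub_b : ¬ IsNonposInt (1 + A - b)
  add_b : ¬ IsNonposInt (A + b)
  sub_d : ¬ IsNonposInt (1 + A - d)
  add_d : ¬ IsNonposInt (A + d)

namespace VwpRegular

lemma re_pos (h : VwpRegular A b d) : 0 < A.re := by
  linarith [h.one_third_lt_re]

lemma not_isNonposInt_half (h : VwpRegular A b d) : ¬ IsNonposInt (A / 2) :=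
  not_isNonposInt_of_re_pos (by simpa using h.re_pos)

lemma not_isNonposInt_vwpLower (h : VwpRegular A b d) (i : Fin 6) :
    ¬ IsNonposInt (vwpLower A b d i) := by
  fin_cases i
  exacts [not_isNonposInt_of_re_pos (by simp [vwpLower]), h.not_isNonposInt_half, h.sub_b, h.add_b,
    h.sub_d, h.add_d]

lemma one_sub (h : VwpRegular A b d) : VwpRegular A (1 - b) d where
  __ := h
  sub_b := by convert h.add_b using 2; ring
  add_b := by convert h.sub_b using 2; ring

lemma add_one (h : VwpRegular A b d) : VwpRegular (A + 1) (b + 1) d where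
  one_third_lt_re := by rw [add_re, one_re]; linarith [h.one_third_lt_re]
  sub_b := by convert h.sub_b using 2; ring
  add_b := by convert not_isNonposInt_add_natCast h.add_b 2 using 2; push_cast; ring
  sub_d := by convert not_isNonposInt_add_natCast h.sub_d 1 using 2; push_cast; ring
  add_d := by convert not_isNonposInt_add_natCast h.add_d 1 using 2; push_cast; ring

lemma add_two (h : VwpRegular A b d) : VwpRegular (A + 2) b d := by
  convert h.add_one.one_sub.add_one.one_sub using 1 <;> ring

end VwpRegular

lemma hypCoeff_vwp_one_sub (n : ℕ) :
    hypCoeff (vwpUpper A (1 - b) d) (vwpLower A (1 - b) d) n =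
      hypCoeff (vwpUpper A b d) (vwpLower A b d) n := by
  have h1 : 1 - (1 - b) = b := by ring
  have h2 : 1 + A - (1 - b) = A + b := by ring
  have h3 : A + (1 - b) = 1 + A - b := by ring
  simp only [hypCoeff, vwpUpper, vwpLower, h1, h2, h3, Fin.prod_univ_six, Matrix.cons_val]
  ring

/-- The hypergeometric term which, up to a rational factor, is the partial sum of the contiguous
relation between the parameters `(A, b, d)` and `(A + 1, b + 1, d)`. -/
noncomputable def contigTerm (A b d : ℂ) (n : ℕ) : ℂ :=
  hypCoeff ![A + 1, b + 1, 1 - b, d + 1, 2 - d] ![1, 1 + A - b, A + b + 2, 2 + A - d, A + d + 1] n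

lemma contigTerm_succ (n : ℕ) :
    contigTerm A b d (n + 1) = contigTerm A b d n *
      ((A + 1 + n) * (b + 1 + n) * (1 - b + n) * (d + 1 + n) * (2 - d + n) /
        ((1 + n) * (1 + A - b + n) * (A + b + 2 + n) * (2 + A - d + n) * (A + d + 1 + n))) := by
  rw [contigTerm, hypCoeff_succ, contigTerm, Finset.prod_div_distrib]
  simp [Fin.prod_univ_five]

lemma hypCoeff_vwp_succ (h : VwpRegular A b d) (n : ℕ) :
    hypCoeff (vwpUpper A b d) (vwpLower A b d) (n + 1) =
      (A + 2 * n + 2) * (b * (1 - b + n)) * (d * (1 - d)) * (A + b + n + 1) /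
        ((n + 1) * (1 + A - b + n) * ((A + b) * (A + b + 1)) * ((1 + A - d) * (A + d))) *
        contigTerm A b d n := by
  have hA : A ≠ 0 := ne_zero_of_not_isNonposInt (not_isNonposInt_of_re_pos h.re_pos)
  have hq : (ascPochhammer ℂ (n + 1)).eval A * ((ascPochhammer ℂ (n + 1)).eval (1 + A / 2) /
      (ascPochhammer ℂ (n + 1)).eval (A / 2)) =
      (A + 2 * n + 2) * (ascPochhammer ℂ n).eval (A + 1) := by
    rw [ascPochhammer_eval_one_add_div h.not_isNonposInt_half, ascPochhammer_succ_eval_left]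
    push_cast
    field_simp
    ring
  have hd : 1 - d + 1 = 2 - d := by ring
  have hd' : 1 + A - d + 1 = 2 + A - d := by ring
  rw [contigTerm, hypCoeff_eq_prod_div, hypCoeff_eq_prod_div, Fin.prod_univ_six, Fin.prod_univ_five]
  simp only [vwpUpper, vwpLower, Matrix.cons_val]
  rw [div_mul_eq_mul_div, hq, div_eq_mul_inv _ ((ascPochhammer ℂ (n + 1)).eval (A + b)),
    inv_ascPochhammer_succ_eval h.add_b]
  simp only [ascPochhammer_succ_eval_left b,
    ascPochhammer_succ_eval_left d, ascPochhammer_succ_eval_left (1 - d),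
    ascPochhammer_succ_eval_left (1 + A - d), ascPochhammer_succ_eval_left (A + d),
    ascPochhammer_succ_eval n, hd, hd', div_eq_mul_inv, mul_inv]
  ring

lemma hypCoeff_vwp_add_one_succ (h : VwpRegular A b d) (n : ℕ) :
    hypCoeff (vwpUpper (A + 1) (b + 1) d) (vwpLower (A + 1) (b + 1) d) (n + 1) =
      -((A + 2 * n + 3) * (A + 1 + n) * (b * (b + 1 + n)) * (d * (1 - d))) /
        ((A + 1) * (n + 1) * (1 + A - b + n) * (A + b + 2 + n) * (2 + A - d + n) *
          (A + d + 1 + n)) * contigTerm A b d n := by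
  have hd : 1 - d + 1 = 2 - d := by ring
  have hAd : 1 + (A + 1) - d = 2 + A - d := by ring
  have hAd' : A + 1 + d = A + d + 1 := by ring
  have hb : 1 - (b + 1) = -b := by ring
  have hb' : -b + 1 = 1 - b := by ring
  have hAb : 1 + (A + 1) - (b + 1) = 1 + A - b := by ring
  have hAb' : A + 1 + (b + 1) = A + b + 2 := by ring
  have hq : (ascPochhammer ℂ (n + 1)).eval (1 + (A + 1) / 2) /
      (ascPochhammer ℂ (n + 1)).eval ((A + 1) / 2) = (A + 2 * n + 3) / (A + 1) := by
    have := ne_zero_of_not_isNonposInt (not_isNonposInt_of_re_pos h.add_one.re_pos)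
    rw [ascPochhammer_eval_one_add_div h.add_one.not_isNonposInt_half]
    push_cast
    field_simp
    ring
  rw [contigTerm, hypCoeff_eq_prod_div, hypCoeff_eq_prod_div, Fin.prod_univ_six, Fin.prod_univ_five]
  simp only [vwpUpper, vwpLower, Matrix.cons_val, hq, hb, hAb, hAb', hAd, hAd']
  simp only [ascPochhammer_succ_eval_left (-b), ascPochhammer_succ_eval_left d,
    ascPochhammer_succ_eval_left (1 - d), ascPochhammer_succ_eval n, hd, hb', div_eq_mul_inv,
    mul_inv]
  ring

/-- The factor in the contiguous relation `S(A, b, d) = r · S(A + 1, b + 1, d)` between the sums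
`S` of the very-well-poised series at `-1`. -/
noncomputable def contigFactor (A b d : ℂ) : ℂ :=
  A * (A + 1) * ((A + b + d) * (A + b + 1 - d)) /
    ((A + d) * (1 + A - d) * ((A + b) * (A + b + 1)))

lemma sum_range_hypCoeff_vwp_sub (h : VwpRegular A b d) (n : ℕ) :
    ∑ k ∈ Finset.range (n + 1),
      (hypCoeff (vwpUpper A b d) (vwpLower A b d) k * (-1) ^ k -
        contigFactor A b d *
          (hypCoeff (vwpUpper (A + 1) (b + 1) d) (vwpLower (A + 1) (b + 1) d) k * (-1) ^ k)) =
      b * d * (1 - d) / ((A + b) * (A + b + 1) * (1 + A - d) * (A + d)) *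
        ((2 * A + b + n + 1) * (contigTerm A b d n * (-1) ^ n)) := by
  have hA : A + 1 ≠ 0 := ne_zero_of_not_isNonposInt (not_isNonposInt_of_re_pos h.add_one.re_pos)
  have hb : ∀ n : ℕ, A + b + n ≠ 0 := add_natCast_ne_zero h.add_b
  have hd : ∀ n : ℕ, A + d + n ≠ 0 := add_natCast_ne_zero h.add_d
  have hd' : ∀ n : ℕ, 1 + A - d + n ≠ 0 := add_natCast_ne_zero h.sub_d
  have hb₀ : A + b ≠ 0 := by simpa using hb 0
  have hb₁ : A + b + 1 ≠ 0 := by simpa using hb 1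
  have hd₀ : A + d ≠ 0 := by simpa using hd 0
  have hd₁ : 1 + A - d ≠ 0 := by simpa using hd' 0
  induction n with
  | zero =>
    simp only [zero_add, Finset.sum_range_one, hypCoeff_zero, contigTerm, contigFactor, pow_zero,
      Nat.cast_zero]
    field_simp
    ring
  | succ n ih =>
    have hn : (n : ℂ) + 1 ≠ 0 := Nat.cast_add_one_ne_zero n
    have hbn : 1 + A - b + n ≠ 0 := add_natCast_ne_zero h.sub_b n
    have hdn : A + d + 1 + n ≠ 0 := by convert hd (n + 1) using 1; push_cast; ring
    have hdn' : 2 + A - d + n ≠ 0 := by convert hd' (n + 1) using 1; push_cast; ring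
    have hbn' : A + b + 2 + n ≠ 0 := by convert hb (n + 2) using 1; push_cast; ring
    rw [Finset.sum_range_succ, ih, hypCoeff_vwp_succ h, hypCoeff_vwp_add_one_succ h,
      contigTerm_succ, contigFactor, pow_succ, add_comm 1 (n : ℂ)]
    push_cast
    field_simp
    ring

/-- The sum `S(A, b, d)` of the very-well-poised series at `-1`. -/
noncomputable def vwpSum (A b d : ℂ) : ℂ := cHyp (vwpUpper A b d) (vwpLower A b d) (-1)

lemma vwpSum_one_sub : vwpSum A (1 - b) d = vwpSum A b d := by
  simp only [vwpSum, cHyp, hypCoeff_vwp_one_sub]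

lemma summable_vwp (h : VwpRegular A b d) :
    Summable fun n => hypCoeff (vwpUpper A b d) (vwpLower A b d) n * (-1) ^ n := by
  have hsum : ∑ i, vwpLower A b d i - ∑ i, vwpUpper A b d i = 3 * A := by
    simp only [vwpLower, vwpUpper, Fin.sum_univ_six, Matrix.cons_val]
    ring
  refine summable_hypCoeff_mul_pow h.not_isNonposInt_vwpLower ?_ (by simp)
  rw [hsum]
  simp only [mul_re, re_ofNat, im_ofNat, zero_mul, sub_zero]
  linarith [h.one_third_lt_re]

lemma contigTerm_isBigO (h : VwpRegular A b d) :
    contigTerm A b d =O[atTop] fun n : ℕ => (n : ℝ) ^ (-3 * A.re - 1) := by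
  have hlower : ∀ i, ¬ IsNonposInt
      ((![1, 1 + A - b, A + b + 2, 2 + A - d, A + d + 1] : Fin 5 → ℂ) i) := by
    have h₂ : A + b + 2 = A + 1 + (b + 1) := by ring
    have h₃ : 2 + A - d = 1 + (A + 1) - d := by ring
    have h₄ : A + d + 1 = A + 1 + d := by ring
    rw [h₂, h₃, h₄]
    intro i
    fin_cases i
    exacts [h.not_isNonposInt_vwpLower 0, h.sub_b, h.add_one.add_b, h.add_one.sub_d,
      h.add_one.add_d]
  have hre : (∑ i, (![A + 1, b + 1, 1 - b, d + 1, 2 - d] : Fin 5 → ℂ) i -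
      ∑ i, (![1, 1 + A - b, A + b + 2, 2 + A - d, A + d + 1] : Fin 5 → ℂ) i).re =
      -3 * A.re - 1 := by
    simp only [Fin.sum_univ_five, Matrix.cons_val, add_re, sub_re, one_re, re_ofNat]
    ring
  exact hre ▸ hypCoeff_isBigO hlower

lemma tendsto_linear_mul_contigTerm (h : VwpRegular A b d) (c : ℂ) :
    Tendsto (fun n : ℕ => (c + n) * (contigTerm A b d n * (-1) ^ n)) atTop (𝓝 0) := by
  have hlin : (fun n : ℕ => c + (n : ℂ)) =O[atTop] fun n : ℕ => (n : ℝ) := by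
    refine .add ?_ ?_
    · exact (isLittleO_const_left.2 (.inr
        (tendsto_norm_atTop_atTop.comp tendsto_natCast_atTop_atTop))).isBigO
    · exact .of_norm_eventuallyLE (.of_forall fun n => by simp)
  have hsign : (fun n : ℕ => (-1 : ℂ) ^ n) =O[atTop] fun _ => (1 : ℝ) :=
    .of_norm_eventuallyLE (.of_forall fun n => by simp)
  refine (hlin.mul ((contigTerm_isBigO h).mul hsign)).trans_tendsto ?_
  refine ((tendsto_rpow_neg_atTop (mul_pos three_pos h.re_pos)).comp
    tendsto_natCast_atTop_atTop).congr' ?_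
  filter_upwards [eventually_gt_atTop 0] with n hn
  have hn : (0 : ℝ) < n := Nat.cast_pos.2 hn
  rw [mul_one, mul_comm (n : ℝ), ← Real.rpow_add_one hn.ne', Function.comp_apply]
  ring_nf

lemma vwpSum_eq_contigFactor_mul (h : VwpRegular A b d) :
    vwpSum A b d = contigFactor A b d * vwpSum (A + 1) (b + 1) d := by
  have hsum := ((summable_vwp h).hasSum.sub ((summable_vwp h.add_one).hasSum.mul_left
    (contigFactor A b d))).tendsto_sum_nat.comp (tendsto_add_atTop_nat 1)
  have hlim := (tendsto_linear_mul_contigTerm h (2 * A + b + 1)).const_mul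
    (b * d * (1 - d) / ((A + b) * (A + b + 1) * (1 + A - d) * (A + d)))
  rw [mul_zero] at hlim
  refine sub_eq_zero.1 (tendsto_nhds_unique hsum (hlim.congr fun n => ?_))
  rw [Function.comp_apply, sum_range_hypCoeff_vwp_sub h, add_right_comm _ 1]

/-- Upper parameters of the factor which relates `S(A, b, d)` to `S(A + 2 N, b, d)`: it is the
`N`-th hypergeometric coefficient with upper parameters `shiftUpper A b d` and lower parameters
`shiftLower A b d`, arranged in pairs `z / 2, (z + 1) / 2` for the duplication formula. -/
noncomputable def shiftUpper (A b d : ℂ) : Fin 8 → ℂ :=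
  ![A / 2, (A + 1) / 2, (A + 1) / 2, (A + 1 + 1) / 2, (A + b + d) / 2, (1 + A + b - d) / 2,
    (1 + A - b + d) / 2, (2 + A - b - d) / 2]

/-- Lower parameters of the factor which relates `S(A, b, d)` to `S(A + 2 N, b, d)`; see
`shiftUpper`. -/
noncomputable def shiftLower (A b d : ℂ) : Fin 8 → ℂ :=
  ![(A + b) / 2, (A + b + 1) / 2, (1 + A - b) / 2, (1 + A - b + 1) / 2, (A + d) / 2,
    (A + d + 1) / 2, (1 + A - d) / 2, (1 + A - d + 1) / 2]

lemma contigFactor_mul_contigFactor (N : ℕ) :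
    contigFactor (A + 2 * N) b d * contigFactor (A + 2 * N + 1) (-b) d =
      ∏ i, (shiftUpper A b d i + N) / (shiftLower A b d i + N) := by
  have hhalf : ∀ z : ℂ, z / 2 + N = (z + 2 * N) / 2 := fun z => by ring
  simp only [shiftUpper, shiftLower, Fin.prod_univ_eight, Matrix.cons_val, contigFactor, hhalf,
    div_div_div_cancel_right₀ (two_ne_zero' ℂ), div_mul_div_comm]
  congr 1 <;> ring

lemma vwpSum_eq_mul_vwpSum_add_two (h : VwpRegular A b d) :
    vwpSum A b d = contigFactor A b d * contigFactor (A + 1) (-b) d * vwpSum (A + 2) b d := by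
  have hb : 1 - (b + 1) = -b := by ring
  have hb' : -b + 1 = 1 - b := by ring
  have hA : A + 1 + 1 = A + 2 := by ring
  have h₁ : VwpRegular (A + 1) (-b) d := hb ▸ h.add_one.one_sub
  rw [vwpSum_eq_contigFactor_mul h, ← vwpSum_one_sub (b := b + 1), hb,
    vwpSum_eq_contigFactor_mul h₁, hb', vwpSum_one_sub, hA, mul_assoc]

lemma VwpRegular.add_two_mul (h : VwpRegular A b d) (N : ℕ) : VwpRegular (A + 2 * N) b d := by
  induction N with
  | zero => simpa
  | succ N ih =>
    convert ih.add_two using 1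
    push_cast
    ring

lemma vwpSum_eq_hypCoeff_mul (h : VwpRegular A b d) (N : ℕ) :
    vwpSum A b d = hypCoeff (shiftUpper A b d) (shiftLower A b d) N * vwpSum (A + 2 * N) b d := by
  induction N with
  | zero => simp [hypCoeff_zero]
  | succ N ih =>
    have hN : A + 2 * N + 2 = A + 2 * (N + 1 : ℕ) := by push_cast; ring
    rw [ih, vwpSum_eq_mul_vwpSum_add_two (h.add_two_mul N), hypCoeff_succ,
      contigFactor_mul_contigFactor, hN, mul_assoc]

lemma prod_Gamma_shiftLower : ∏ i, Gamma (shiftLower A b d i) =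
    (Real.pi * 2 ^ (1 - 2 * A)) ^ 2 *
      (Gamma (A + b) * Gamma (1 + A - b) * Gamma (A + d) * Gamma (1 + A - d)) := by
  have hpow : ∀ z : ℂ, 2 - (A + z + (1 + A - z)) = 1 - 2 * A := fun z => by ring
  have hb := Gamma_halves_mul_Gamma_halves (A + b) (1 + A - b)
  have hd := Gamma_halves_mul_Gamma_halves (A + d) (1 + A - d)
  rw [hpow] at hb hd
  calc ∏ i, Gamma (shiftLower A b d i)
      = Gamma ((A + b) / 2) * Gamma ((A + b + 1) / 2) *
          (Gamma ((1 + A - b) / 2) * Gamma ((1 + A - b + 1) / 2)) *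
        (Gamma ((A + d) / 2) * Gamma ((A + d + 1) / 2) *
          (Gamma ((1 + A - d) / 2) * Gamma ((1 + A - d + 1) / 2))) := by
        simp only [shiftLower, Fin.prod_univ_eight, Matrix.cons_val, mul_assoc]
    _ = _ := by rw [hb, hd]; ring

lemma prod_Gamma_shiftUpper : ∏ i, Gamma (shiftUpper A b d i) =
    Real.pi * 2 ^ (1 - 2 * A) * (Gamma A * Gamma (A + 1) *
      (Gamma ((A + b + d) / 2) * Gamma ((1 + A + b - d) / 2) * Gamma ((1 + A - b + d) / 2) *
        Gamma ((2 + A - b - d) / 2))) := by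
  have hpow : 2 - (A + (A + 1)) = 1 - 2 * A := by ring
  rw [← mul_assoc, ← hpow, ← Gamma_halves_mul_Gamma_halves A (A + 1)]
  simp only [shiftUpper, Fin.prod_univ_eight, Matrix.cons_val, mul_assoc]

lemma norm_add_natCast_div_le {R M : ℝ} {u z w : ℂ} (hu : ‖u‖ ≤ M) (hw : ‖w‖ ≤ M) (hz : R ≤ z.re)
    (hR : M < R) (j : ℕ) : ‖(u + j) / (z + w + j)‖ ≤ (M + j) / (R - M + j) := by
  have hnum : ‖u + j‖ ≤ M + j := (norm_add_le _ _).trans (by simpa using hu)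
  have hden : R - M + j ≤ ‖z + w + j‖ := by
    refine le_trans ?_ (re_le_norm _)
    have := neg_le_of_abs_le ((abs_re_le_norm w).trans hw)
    simp only [add_re, natCast_re]
    linarith
  rw [norm_div]
  exact div_le_div₀ ((norm_nonneg _).trans hnum) hnum (by linarith [j.cast_nonneg (α := ℝ)]) hden

lemma norm_one_add_div_le {x : ℝ} {z : ℂ} (hx : 0 < x) (hz : x ≤ ‖z‖) :
    ‖(1 + z) / z‖ ≤ (1 + x) / x := by
  rw [norm_div, div_le_div_iff₀ (hx.trans_le hz) hx]
  nlinarith [norm_add_le 1 z, norm_one (α := ℂ)]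

lemma div_mul_div_pow_four_le {R M x : ℝ} (hM : 0 ≤ M) (hx : 0 ≤ x)
    (hR : M ^ 2 + 4 * M + 3 ≤ R) :
    (R + M + x) / (1 + x) * ((M + x) / (R - M + x)) ^ 4 ≤ (M + x) / (R - M + x) := by
  have hpos : 0 < R - M + x := by nlinarith
  have h₁ : (R + M + x) * (M + x) / (R - M + x) ^ 2 ≤ 1 :=
    div_le_one_of_le₀ (by nlinarith) (by positivity)
  have h₂ : (M + x) ^ 2 / ((1 + x) * (R - M + x)) ≤ 1 :=
    div_le_one_of_le₀ (by nlinarith) (by positivity)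
  calc (R + M + x) / (1 + x) * ((M + x) / (R - M + x)) ^ 4
      = (R + M + x) * (M + x) / (R - M + x) ^ 2 * ((M + x) ^ 2 / ((1 + x) * (R - M + x))) *
          ((M + x) / (R - M + x)) := by field_simp
    _ ≤ 1 * 1 * ((M + x) / (R - M + x)) := by gcongr
    _ = (M + x) / (R - M + x) := by rw [one_mul, one_mul]

-- Only the ratio `(A + j) / (1 + j)` grows with `A`; the four ratios involving `b` and `d` decay
-- like `1 / A` and absorb it, uniformly in `j` once `A.re` exceeds the stated bound.
lemma norm_vwp_ratio_le {M : ℝ} (hb : ‖b‖ ≤ M) (hb' : ‖1 - b‖ ≤ M) (hd : ‖d‖ ≤ M)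
    (hd' : ‖1 - d‖ ≤ M) (hA : |A.im| ≤ M) (hR : M ^ 2 + 4 * M + 3 ≤ A.re) (j : ℕ) :
    ‖∏ i, (vwpUpper A b d i + j) / (vwpLower A b d i + j)‖ ≤
      (M + j) / (A.re - M + j) * ((3 / 2 + j) / (1 / 2 + j)) := by
  have hM : 0 ≤ M := (norm_nonneg b).trans hb
  have hj : (0 : ℝ) ≤ j := j.cast_nonneg
  have hMA : M < A.re := by nlinarith
  have hre : 0 < A.re := hM.trans_lt hMA
  have : 0 < A.re - M := sub_pos.2 hMA
  have h₀ : ‖(A + j) / (1 + j)‖ ≤ (A.re + M + j) / (1 + j) := by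
    have hden : ‖(1 + j : ℂ)‖ = 1 + j := by
      exact_mod_cast norm_natCast (1 + j)
    have hnum := norm_le_abs_re_add_abs_im (A + j)
    rw [add_re, add_im, natCast_re, natCast_im, add_zero, abs_of_nonneg (by linarith)] at hnum
    rw [norm_div, hden]
    gcongr
    linarith
  have h₁ : ‖(1 + A / 2 + j) / (A / 2 + j)‖ ≤ (3 / 2 + j) / (1 / 2 + j) := by
    have hle : 1 / 2 + j ≤ ‖A / 2 + j‖ := by
      refine le_trans ?_ (re_le_norm _)
      simp only [add_re, div_ofNat_re, natCast_re]
      nlinarith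
    convert norm_one_add_div_le (by positivity) hle using 2 <;> ring
  have hpair : ∀ c : ℂ, ‖c‖ ≤ M → ‖1 - c‖ ≤ M →
      ‖(c + j) / (1 + A - c + j)‖ ≤ (M + j) / (A.re - M + j) ∧
        ‖(1 - c + j) / (A + c + j)‖ ≤ (M + j) / (A.re - M + j) := fun c hc hc' => by
    refine ⟨?_, norm_add_natCast_div_le hc' hc le_rfl hMA j⟩
    convert norm_add_natCast_div_le hc hc' le_rfl hMA j using 3
    ring
  obtain ⟨h₂, h₃⟩ := hpair b hb hb'
  obtain ⟨h₄, h₅⟩ := hpair d hd hd'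
  simp only [vwpUpper, vwpLower, Fin.prod_univ_six, Matrix.cons_val, norm_mul]
  calc _ ≤ (A.re + M + j) / (1 + j) * ((3 / 2 + j) / (1 / 2 + j)) * ((M + j) / (A.re - M + j)) *
          ((M + j) / (A.re - M + j)) * ((M + j) / (A.re - M + j)) *
          ((M + j) / (A.re - M + j)) := by gcongr
    _ = (A.re + M + j) / (1 + j) * ((M + j) / (A.re - M + j)) ^ 4 *
          ((3 / 2 + j) / (1 / 2 + j)) := by ring
    _ ≤ _ := by gcongr; exact div_mul_div_pow_four_le hM hj hR

lemma norm_hypCoeff_vwp_le {M : ℝ} (hb : ‖b‖ ≤ M) (hb' : ‖1 - b‖ ≤ M) (hd : ‖d‖ ≤ M)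
    (hd' : ‖1 - d‖ ≤ M) (hA : |A.im| ≤ M) (hR : M ^ 2 + 4 * M + 3 ≤ A.re) (n : ℕ) :
    ‖hypCoeff (vwpUpper A b d) (vwpLower A b d) n‖ ≤
      ‖hypCoeff ![(M : ℂ), 3 / 2] ![(M : ℂ) + 3, 1 / 2] n‖ := by
  have hM : 0 ≤ M := (norm_nonneg b).trans hb
  rw [hypCoeff_eq_prod_range, hypCoeff_eq_prod_range, norm_prod, norm_prod]
  gcongr with j
  refine (norm_vwp_ratio_le hb hb' hd hd' hA hR j).trans ?_
  have hcast : ∏ i, ((![(M : ℂ), 3 / 2] : Fin 2 → ℂ) i + j) /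
      ((![(M : ℂ) + 3, 1 / 2] : Fin 2 → ℂ) i + j) =
      ((M + j) / (M + 3 + j) * ((3 / 2 + j) / (1 / 2 + j)) : ℝ) := by
    simp [Fin.prod_univ_two, mul_div_mul_comm]
  rw [hcast, norm_real, Real.norm_of_nonneg (by positivity)]
  gcongr
  nlinarith

lemma summable_norm_hypCoeff_majorant {M : ℝ} (hM : 0 ≤ M) :
    Summable fun n => ‖hypCoeff ![(M : ℂ), 3 / 2] ![(M : ℂ) + 3, 1 / 2] n‖ := by
  have hlower : ∀ i, ¬ IsNonposInt ((![(M : ℂ) + 3, 1 / 2] : Fin 2 → ℂ) i) := by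
    intro i
    fin_cases i
    exacts [not_isNonposInt_of_re_pos (by simpa using (by positivity : 0 < M + 3)),
      not_isNonposInt_of_re_pos (by norm_num)]
  have h := summable_hypCoeff_mul_pow (a := ![(M : ℂ), 3 / 2]) hlower
    (by norm_num [Fin.sum_univ_two]; linarith) (norm_one (α := ℂ)).le
  simpa using h.norm

lemma eventually_le_add_two_mul_re (A : ℂ) (r : ℝ) :
    ∀ᶠ N : ℕ in atTop, r ≤ (A + 2 * N).re := by
  have h : Tendsto (fun N : ℕ => A.re + 2 * N) atTop atTop :=
    tendsto_atTop_add_const_left _ _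
      (tendsto_natCast_atTop_atTop.const_mul_atTop two_pos)
  simpa using h.eventually_ge_atTop r

lemma tendsto_hypCoeff_vwp {M : ℝ} (hb : ‖b‖ ≤ M) (hb' : ‖1 - b‖ ≤ M) (hd : ‖d‖ ≤ M)
    (hd' : ‖1 - d‖ ≤ M) (hA : |A.im| ≤ M) (n : ℕ) :
    Tendsto (fun N : ℕ => hypCoeff (vwpUpper (A + 2 * N) b d) (vwpLower (A + 2 * N) b d) n) atTop
      (𝓝 (0 ^ n)) := by
  have hratio : ∀ j : ℕ, Tendsto (fun N : ℕ => ∏ i, (vwpUpper (A + 2 * N) b d i + j) /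
      (vwpLower (A + 2 * N) b d i + j)) atTop (𝓝 0) := fun j => by
    have hden : Tendsto (fun N : ℕ => (A + 2 * N).re - M + j) atTop atTop :=
      tendsto_atTop_add_const_right _ _ (tendsto_atTop_add_const_right _ _
        (tendsto_atTop.2 (eventually_le_add_two_mul_re A)))
    have hbound := (hden.const_div_atTop (M + j)).mul_const ((3 / 2 + (j : ℝ)) / (1 / 2 + j))
    rw [zero_mul] at hbound
    refine squeeze_zero_norm' ?_ hbound
    filter_upwards [eventually_le_add_two_mul_re A (M ^ 2 + 4 * M + 3)] with N hN
    exact norm_vwp_ratio_le hb hb' hd hd' (by simpa using hA) hN j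
  simpa only [hypCoeff_eq_prod_range, Finset.prod_const, Finset.card_range] using
    tendsto_finsetProd (Finset.range n) fun j _ => hratio j

lemma tendsto_vwpSum_add_two_mul (A b d : ℂ) :
    Tendsto (fun N : ℕ => vwpSum (A + 2 * N) b d) atTop (𝓝 1) := by
  obtain ⟨M, hM, hb, hb', hd, hd', hA⟩ : ∃ M : ℝ, 0 ≤ M ∧ ‖b‖ ≤ M ∧ ‖1 - b‖ ≤ M ∧ ‖d‖ ≤ M ∧
      ‖1 - d‖ ≤ M ∧ |A.im| ≤ M := by
    have hsub : ∀ c : ℂ, ‖1 - c‖ ≤ 1 + ‖c‖ := fun c => by simpa using norm_sub_le 1 c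
    refine ⟨1 + ‖b‖ + ‖d‖ + |A.im|, by positivity, ?_, ?_, ?_, ?_, ?_⟩ <;>
      linarith [norm_nonneg b, norm_nonneg d, abs_nonneg A.im, hsub b, hsub d]
  have hone : ∑' n : ℕ, (0 : ℂ) ^ n * (-1) ^ n = 1 := by
    simp [← mul_pow, tsum_geometric_of_norm_lt_one]
  rw [← hone]
  refine tendsto_tsum_of_dominated_convergence (summable_norm_hypCoeff_majorant hM)
    (fun n => (tendsto_hypCoeff_vwp hb hb' hd hd' hA n).mul_const _) ?_
  filter_upwards [eventually_le_add_two_mul_re A (M ^ 2 + 4 * M + 3)] with N hN n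
  simpa using norm_hypCoeff_vwp_le hb hb' hd hd' (by simpa using hA) hN n

lemma VwpRegular.not_isNonposInt_shiftLower (h : VwpRegular A b d) (i : Fin 8) :
    ¬ IsNonposInt (shiftLower A b d i) := by
  fin_cases i
  exacts [not_isNonposInt_div_two h.add_b, not_isNonposInt_add_one_div_two h.add_b,
    not_isNonposInt_div_two h.sub_b, not_isNonposInt_add_one_div_two h.sub_b,
    not_isNonposInt_div_two h.add_d, not_isNonposInt_add_one_div_two h.add_d,
    not_isNonposInt_div_two h.sub_d, not_isNonposInt_add_one_div_two h.sub_d]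

lemma sum_shiftUpper_eq_sum_shiftLower :
    ∑ i, shiftUpper A b d i = ∑ i, shiftLower A b d i := by
  simp only [shiftUpper, shiftLower, Fin.sum_univ_eight, Matrix.cons_val]
  ring

theorem vwpSum_eq (h : VwpRegular A b d) :
    vwpSum A b d = Real.pi * 2 ^ (1 - 2 * A) *
      (Gamma (A + b) * Gamma (1 + A - b) * Gamma (A + d) * Gamma (1 + A - d)) /
      (Gamma A * Gamma (A + 1) *
        (Gamma ((A + b + d) / 2) * Gamma ((1 + A + b - d) / 2) * Gamma ((1 + A - b + d) / 2) *
          Gamma ((2 + A - b - d) / 2))) := by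
  have hlim := (tendsto_hypCoeff h.not_isNonposInt_shiftLower
    sum_shiftUpper_eq_sum_shiftLower).mul (tendsto_vwpSum_add_two_mul A b d)
  have hscale : (Real.pi : ℂ) * 2 ^ (1 - 2 * A) ≠ 0 :=
    mul_ne_zero (ofReal_ne_zero.2 Real.pi_ne_zero) (by simp [cpow_eq_zero_iff])
  calc vwpSum A b d
      = (∏ i, Gamma (shiftLower A b d i)) / (∏ i, Gamma (shiftUpper A b d i)) * 1 :=
        tendsto_nhds_unique (tendsto_const_nhds.congr (vwpSum_eq_hypCoeff_mul h)) hlim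
    _ = _ := by
        rw [mul_one, prod_Gamma_shiftLower, prod_Gamma_shiftUpper, pow_two, mul_assoc,
          mul_div_mul_left _ _ hscale]

end VeryWellPoised

section OneHalf

variable {a : ℂ}

lemma vwpRegular_one_half (hadd : ¬ IsNonposInt (1 + a)) (hsub : ¬ IsNonposInt (1 - a)) :
    VwpRegular (1 / 2) (1 / 2 + a) (1 / 4) where
  one_third_lt_re := by norm_num
  sub_b := by convert hsub using 2; ring
  add_b := by convert hadd using 2; ring
  sub_d := not_isNonposInt_of_re_pos (by norm_num)
  add_d := not_isNonposInt_of_re_pos (by norm_num)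

lemma hypCoeff_vwp_one_half (n : ℕ) :
    hypCoeff (vwpUpper (1 / 2) (1 / 2 + a) (1 / 4)) (vwpLower (1 / 2) (1 / 2 + a) (1 / 4)) n =
      hypCoeff ![1 / 2, 1 / 2 + a, 1 / 2 - a] ![1, 1 + a, 1 - a] n := by
  have h₁ : (1 + 1 / 4 : ℂ) = 5 / 4 := by norm_num
  have h₂ : (1 / 2 / 2 : ℂ) = 1 / 4 := by norm_num
  have h₃ : 1 - (1 / 2 + a) = 1 / 2 - a := by ring
  have h₄ : 1 + 1 / 2 - (1 / 2 + a) = 1 - a := by ring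
  have h₅ : 1 / 2 + (1 / 2 + a) = 1 + a := by ring
  have h₆ : (1 + 1 / 2 - 1 / 4 : ℂ) = 5 / 4 := by norm_num
  have h₇ : (1 / 2 + 1 / 4 : ℂ) = 3 / 4 := by norm_num
  have h₈ : (1 - 1 / 4 : ℂ) = 3 / 4 := by norm_num
  have hne (z : ℂ) (hz : 0 < z.re) : (ascPochhammer ℂ n).eval z ≠ 0 :=
    ascPochhammer_eval_ne_zero (not_isNonposInt_of_re_pos hz) n
  have hne₁ := hne (1 / 4) (by norm_num)
  have hne₃ := hne (3 / 4) (by norm_num)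
  have hne₅ := hne (5 / 4) (by norm_num)
  simp only [hypCoeff_eq_prod_div, vwpUpper, vwpLower, Fin.prod_univ_six, Fin.prod_univ_three,
    Matrix.cons_val, h₁, h₂, h₃, h₄, h₅, h₆, h₇, h₈]
  field_simp

lemma vwpSum_one_half (hadd : ¬ IsNonposInt (1 + a)) (hsub : ¬ IsNonposInt (1 - a)) :
    vwpSum (1 / 2) (1 / 2 + a) (1 / 4) = Real.pi * Gamma (1 + a) * Gamma (1 - a) /
      ((√2 : ℝ) * Gamma (a / 2 + 5 / 8) * Gamma (a / 2 + 7 / 8) *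
        Gamma (-a / 2 + 5 / 8) * Gamma (-a / 2 + 7 / 8)) := by
  have hconst : Gamma (3 / 4) * Gamma (5 / 4) / (Gamma (1 / 2) * Gamma (3 / 2)) =
      ((√2 : ℝ) : ℂ)⁻¹ := by
    have hne : Gamma (1 / 2) * Gamma (3 / 2) ≠ 0 :=
      mul_ne_zero (Gamma_ne_zero_of_re_pos (by norm_num)) (Gamma_ne_zero_of_re_pos (by norm_num))
    rw [Gamma_three_fourths_mul_Gamma_five_fourths, div_right_comm, div_self hne, one_div]
  have hpow : (2 : ℂ) ^ (1 - 2 * (1 / 2) : ℂ) = 1 := by norm_num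
  calc vwpSum (1 / 2) (1 / 2 + a) (1 / 4)
      = Real.pi * (Gamma (1 + a) * Gamma (1 - a) * Gamma (3 / 4) * Gamma (5 / 4)) /
          (Gamma (1 / 2) * Gamma (3 / 2) * (Gamma (a / 2 + 5 / 8) * Gamma (a / 2 + 7 / 8) *
            Gamma (-a / 2 + 5 / 8) * Gamma (-a / 2 + 7 / 8))) := by
        rw [vwpSum_eq (vwpRegular_one_half hadd hsub), hpow, mul_one]
        ring_nf
    _ = Gamma (3 / 4) * Gamma (5 / 4) / (Gamma (1 / 2) * Gamma (3 / 2)) *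
          (Real.pi * Gamma (1 + a) * Gamma (1 - a) / (Gamma (a / 2 + 5 / 8) *
            Gamma (a / 2 + 7 / 8) * Gamma (-a / 2 + 5 / 8) * Gamma (-a / 2 + 7 / 8))) := by
        rw [div_mul_div_comm]
        ring
    _ = _ := by
        rw [hconst]
        simp only [div_eq_mul_inv, mul_inv]
        ring

end OneHalf

lemma not_isNonposInt_one_add {a : ℂ} (ha : ¬ ∃ k : ℤ, k ≠ 0 ∧ a = (k : ℂ)) :
    ¬ IsNonposInt (1 + a) := by
  rintro ⟨k, hk⟩
  exact ha ⟨-(k + 1), by omega, by push_cast; linear_combination hk⟩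

theorem stmt14 (a : ℂ) (ha : ¬ ∃ k : ℤ, k ≠ 0 ∧ a = (k : ℂ))
    (h1 : ¬ IsNonposInt (a / 2 + 5 / 8)) (h2 : ¬ IsNonposInt (a / 2 + 7 / 8))
    (h3 : ¬ IsNonposInt (-a / 2 + 5 / 8)) (h4 : ¬ IsNonposInt (-a / 2 + 7 / 8)) :
    Summable (fun k : ℕ =>
      hypCoeff ![1 / 2, 1 / 2 + a, 1 / 2 - a] ![1, 1 + a, 1 - a] k * (-1 : ℂ) ^ k) ∧
    cHyp ![1 / 2, 1 / 2 + a, 1 / 2 - a] ![1, 1 + a, 1 - a] (-1)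
      = (Real.pi : ℂ) * Gamma (1 + a) * Gamma (1 - a)
          / ((Real.sqrt 2 : ℂ) * Gamma (a / 2 + 5 / 8) * Gamma (a / 2 + 7 / 8)
            * Gamma (-a / 2 + 5 / 8) * Gamma (-a / 2 + 7 / 8)) := by
  have hadd := not_isNonposInt_one_add ha
  have hsub : ¬ IsNonposInt (1 - a) :=
    not_isNonposInt_one_add (a := -a) fun ⟨k, hk, hak⟩ =>
      ha ⟨-k, neg_ne_zero.2 hk, by rw [Int.cast_neg, ← hak, neg_neg]⟩
  constructor
  · simpa only [hypCoeff_vwp_one_half] using summable_vwp (vwpRegular_one_half hadd hsub)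
  · rw [← vwpSum_one_half hadd hsub, vwpSum]
    simp only [cHyp, hypCoeff_vwp_one_half]
end

section
/- Let p be an odd prime and q = p^r a prime power with q ≡ 1 (mod 4). Let χ_4 be a multiplicative character of F_q^* of order 4 and φ the quadratic character. Let x, y be integers with q = x^2 + y^2, x ≡ 1 (mod 4), and such that p does not divide x whenever p ≡ 1 (mod 4). Then _4F_4(χ_4, χ_4^3, χ_4, χ_4^3; ε, φ, ε, φ | 1)_q = 1 + 2x if q ≡ 1 (mod 8), and _4F_4(χ_4, χ_4^3, χ_4, χ_4^3; ε, φ, ε, φ | 1)_q = 1 − 2x if q ≡ 5 (mod 8). -/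
/-- The finite field hypergeometric function `ₘFₘ` of McCarthy, with upper parameters `A`,
lower parameters `B` (indexed by a finite type `ι`), and argument `lam`. -/
noncomputable def ffHyp {F : Type} [Field F] [Fintype F] (θ : AddChar F ℂ)
    {ι : Type} [Fintype ι] (A B : ι → MulChar F ℂ) (lam : F) : ℂ :=
  letI : Fintype (MulChar F ℂ) := Fintype.ofFinite _
  (-1 : ℂ) / ((Fintype.card F : ℂ) - 1) *
    ∑ χ : MulChar F ℂ,
      (∏ i, (gaussSum (A i * χ) θ / gaussSum (A i) θ) *
        (gaussSum ((B i * χ)⁻¹) θ / gaussSum ((B i)⁻¹) θ)) *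
      χ (-1) ^ (Fintype.card ι) * χ lam

/-!
Write `J` for Jacobi sums over `F`, `q` for the cardinality of `F`, `φ` for the quadratic
character and `A = χ₄`, so that `χ₄ ^ 3 = A * φ`. The duplication formula
`g(B) g(B φ) = B(4)⁻¹ g(B ^ 2) g(φ)` turns the summand at `χ` into
`J(A ^ 2 * χ ^ 2, (χ ^ 2)⁻¹) ^ 2`. Expanding the square and summing over `χ` by orthogonality
leaves `-(J(φ, φ) + J(χ₄, φ) + J(χ₄⁻¹, φ)) = 1 - 2 * a`, where `J(χ₄, φ) = a + b * I` is a
Gaussian integer and its conjugate is `J(χ₄⁻¹, φ)`.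

The norm of this Gaussian integer is `q = a ^ 2 + b ^ 2`. Since
`J(χ₄, φ) + q = ∑ u, (χ₄ u - 1) * (φ (1 - u) - 1)` is divisible by `(I - 1) * (-2)`, the integer
`b` is even and `a + b + q` is divisible by `4`; this determines the sign of `a`. If
`p % 4 = 1`, then `2 * a = ∑ x, φ (x - x ^ 3)` is congruent modulo `p` to a binomial coefficient,
up to sign, which Lucas' theorem shows to be prime to `p`. A prime power has only one
representation `a ^ 2 + b ^ 2` with `a` odd and, if `p % 4 = 1`, prime to `p`; hence `a = ± x`.
-/

section SumsOfTwoSquares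

lemma sq_eq_sq_of_dvd_mul_sub_mul {q a b x y : ℤ} (hq : Odd q) (hab : a ^ 2 + b ^ 2 = q)
    (hxy : x ^ 2 + y ^ 2 = q) (ha : Odd a) (hx : Odd x) (h : q ∣ a * y - b * x) :
    a ^ 2 = x ^ 2 := by
  have hb : Even b := (Int.even_pow' two_ne_zero).mp ((Int.odd_add.mp (hab ▸ hq)).mp ha.pow)
  have hy : Even y := (Int.even_pow' two_ne_zero).mp ((Int.odd_add.mp (hxy ▸ hq)).mp hx.pow)
  have hq0 : 0 < q := by
    rw [← hab]
    have : a ≠ 0 := by rintro rfl; simp at ha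
    positivity
  have hle : |a * y - b * x| ≤ q := by
    refine abs_le_of_sq_le_sq ?_ hq0.le
    nlinarith [sq_nonneg (a * x + b * y)]
  have hne : |a * y - b * x| ≠ q := by
    intro he
    have : Even q := he ▸ even_abs.mpr ((hy.mul_left a).sub (hb.mul_right x))
    exact Int.not_even_iff_odd.mpr hq this
  have hzero : a * y - b * x = 0 := Int.eq_zero_of_abs_lt_dvd h (hle.lt_of_ne hne)
  have hprod : q * (a ^ 2 - x ^ 2) = (a * y - b * x) * (a * y + b * x) := by
    linear_combination x ^ 2 * hab - a ^ 2 * hxy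
  rw [hzero, zero_mul] at hprod
  exact sub_eq_zero.mp ((mul_eq_zero.mp hprod).resolve_left hq0.ne')

lemma sq_eq_sq_of_sq_add_sq_eq_prime_pow {p r : ℕ} (hp : p.Prime) (hodd : Odd p) (hr : r ≠ 0)
    {a b x y : ℤ} (hab : a ^ 2 + b ^ 2 = (p : ℤ) ^ r) (hxy : x ^ 2 + y ^ 2 = (p : ℤ) ^ r)
    (ha : Odd a) (hx : Odd x) (hpa : ¬ (p : ℤ) ∣ a) (hpx : ¬ (p : ℤ) ∣ x) :
    a ^ 2 = x ^ 2 := by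
  have hpZ : Prime (p : ℤ) := Nat.prime_iff_prime_int.mp hp
  have hqodd : Odd ((p : ℤ) ^ r) := (Int.odd_coe_nat p |>.mpr hodd).pow
  have hp2 : ¬ (p : ℤ) ∣ 2 := by
    intro h
    have : p ∣ 2 := by exact_mod_cast h
    exact hp.ne_one (hodd.coprime_two_right.eq_one_of_dvd this)
  have hpb : ¬ (p : ℤ) ∣ b := by
    intro h
    refine hpa (hpZ.dvd_of_dvd_pow (n := 2) ?_)
    rw [eq_sub_of_add_eq hab]
    exact dvd_sub (dvd_pow_self _ hr) (dvd_pow h two_ne_zero)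
  have hnot : ¬ ((p : ℤ) ∣ a * y - b * x ∧ (p : ℤ) ∣ a * y + b * x) := by
    rintro ⟨h₁, h₂⟩
    have h : (p : ℤ) ∣ 2 * (b * x) := by
      rw [show 2 * (b * x) = (a * y + b * x) - (a * y - b * x) by ring]
      exact dvd_sub h₂ h₁
    rcases hpZ.dvd_or_dvd h with h | h
    · exact hp2 h
    · exact (hpZ.dvd_or_dvd h).elim hpb hpx
  have hdvd : (p : ℤ) ^ r ∣ (a * y - b * x) * (a * y + b * x) :=
    ⟨a ^ 2 - x ^ 2, by linear_combination a ^ 2 * hxy - x ^ 2 * hab⟩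
  by_cases h : (p : ℤ) ∣ a * y - b * x
  · have h' := hpZ.pow_dvd_of_dvd_mul_right r (fun h' => hnot ⟨h, h'⟩) hdvd
    exact sq_eq_sq_of_dvd_mul_sub_mul hqodd hab hxy ha hx h'
  · have h' := hpZ.pow_dvd_of_dvd_mul_left r h hdvd
    refine sq_eq_sq_of_dvd_mul_sub_mul (b := -b) hqodd (by rwa [neg_sq]) hxy ha hx ?_
    rwa [neg_mul, sub_neg_eq_add]

lemma eq_zero_or_eq_zero_of_sq_add_sq_eq_prime_pow {p r : ℕ} (hp : p.Prime) (hp3 : p % 4 = 3)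
    {a b : ℤ} (hab : a ^ 2 + b ^ 2 = (p : ℤ) ^ r) : a = 0 ∨ b = 0 := by
  have : Fact p.Prime := ⟨hp⟩
  let z : GaussianInt := ⟨a, b⟩
  have hdvd : z ∣ (p : GaussianInt) ^ r := by
    refine ⟨star z, ?_⟩
    rw [← Zsqrtd.norm_eq_mul_conj]
    have hnorm : z.norm = (p : ℤ) ^ r := by rw [Zsqrtd.norm_def, ← hab]; ring
    rw [hnorm]; push_cast; rfl
  obtain ⟨k, -, hzk⟩ :=
    (dvd_prime_pow (GaussianInt.prime_of_nat_prime_of_mod_four_eq_three p hp3) r).mp hdvd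
  obtain ⟨u, hu⟩ := hzk.symm
  have hunit : (u : GaussianInt).re ^ 2 + (u : GaussianInt).im ^ 2 = 1 := by
    have h := (Zsqrtd.norm_eq_one_iff' (by norm_num) (u : GaussianInt)).mpr u.isUnit
    rw [Zsqrtd.norm_def] at h
    linarith
  have hcast : (p : GaussianInt) ^ k = ((p ^ k : ℤ) : GaussianInt) := by push_cast; rfl
  rw [hcast] at hu
  have ha : a = p ^ k * (u : GaussianInt).re := by rw [← Zsqrtd.re_smul, hu]
  have hb : b = p ^ k * (u : GaussianInt).im := by rw [← Zsqrtd.im_smul, hu]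
  have hu0 : (u : GaussianInt).re = 0 ∨ (u : GaussianInt).im = 0 := by
    by_contra! h
    have := sq_pos_of_ne_zero h.1
    have := sq_pos_of_ne_zero h.2
    omega
  exact hu0.imp (fun h => by rw [ha, h, mul_zero]) (fun h => by rw [hb, h, mul_zero])

lemma sq_eq_sq_of_sq_add_sq_eq_odd_prime_pow {p r : ℕ} (hp : p.Prime) (hodd : Odd p) (hr : r ≠ 0)
    {a b x y : ℤ} (hab : a ^ 2 + b ^ 2 = (p : ℤ) ^ r) (hxy : x ^ 2 + y ^ 2 = (p : ℤ) ^ r)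
    (ha : Odd a) (hx : Odd x) (hpa : p % 4 = 1 → ¬ (p : ℤ) ∣ a)
    (hpx : p % 4 = 1 → ¬ (p : ℤ) ∣ x) : a ^ 2 = x ^ 2 := by
  rcases Nat.odd_mod_four_iff.mp (Nat.odd_iff.mp hodd) with hp1 | hp3
  · exact sq_eq_sq_of_sq_add_sq_eq_prime_pow hp hodd hr hab hxy ha hx (hpa hp1) (hpx hp1)
  · have ha0 : a ≠ 0 := by rintro rfl; simp at ha
    have hx0 : x ≠ 0 := by rintro rfl; simp at hx
    obtain rfl := (eq_zero_or_eq_zero_of_sq_add_sq_eq_prime_pow hp hp3 hab).resolve_left ha0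
    obtain rfl := (eq_zero_or_eq_zero_of_sq_add_sq_eq_prime_pow hp hp3 hxy).resolve_left hx0
    linarith

lemma sq_add_two_mul_sq_emod_eight {a : ℤ} (ha : Odd a) (k : ℤ) :
    (a ^ 2 + (2 * k) ^ 2) % 8 = 1 + 4 * (k % 2) := by
  have hsq : 8 ∣ a ^ 2 - 1 := Int.eight_dvd_sq_sub_one_of_odd ha
  have hk : 2 ∣ k ^ 2 - k := by
    rw [sq, ← mul_sub_one]
    exact (Int.even_mul_pred_self k).two_dvd
  rw [mul_pow]
  omega

lemma eq_neg_of_sq_add_sq_emod_eight_eq_one {q a b x : ℤ} (hab : a ^ 2 + b ^ 2 = q) (hb : Even b)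
    (hdvd : 4 ∣ a + b + q) (hax : a ^ 2 = x ^ 2) (hx : x ≡ 1 [ZMOD 4]) (hq : q % 8 = 1) :
    a = -x := by
  obtain ⟨k, rfl⟩ := hb.two_dvd
  have hmod := sq_add_two_mul_sq_emod_eight (Int.odd_iff.mpr (by omega) : Odd a) k
  have hx' : x % 4 = 1 := hx
  rcases sq_eq_sq_iff_eq_or_eq_neg.mp hax with rfl | rfl <;> omega

lemma eq_of_sq_add_sq_emod_eight_eq_five {q a b x : ℤ} (hab : a ^ 2 + b ^ 2 = q) (hb : Even b)
    (hdvd : 4 ∣ a + b + q) (hax : a ^ 2 = x ^ 2) (hx : x ≡ 1 [ZMOD 4]) (hq : q % 8 = 5) :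
    a = x := by
  obtain ⟨k, rfl⟩ := hb.two_dvd
  have hmod := sq_add_two_mul_sq_emod_eight (Int.odd_iff.mpr (by omega) : Odd a) k
  have hx' : x % 4 = 1 := hx
  rcases sq_eq_sq_iff_eq_or_eq_neg.mp hax with rfl | rfl <;> omega

end SumsOfTwoSquares

section Binomial

open Finset

/-- Lucas' theorem: all `r` digits of the two entries in base `p` are `n`, respectively `k`. -/
lemma choose_mul_geomSum_modEq {p : ℕ} [Fact p.Prime] {n k : ℕ} (hn : n < p) (hk : k < p)
    (r : ℕ) :
    (n * ∑ i ∈ range r, p ^ i).choose (k * ∑ i ∈ range r, p ^ i) ≡ n.choose k ^ r [MOD p] := by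
  induction r with
  | zero => simp [Nat.ModEq.refl]
  | succ r ih =>
    have hdigits (c : ℕ) : c * ∑ i ∈ range (r + 1), p ^ i = c + p * (c * ∑ i ∈ range r, p ^ i) := by
      rw [geom_sum_succ]; ring
    have hlucas := Choose.choose_modEq_choose_mod_mul_choose_div_nat (p := p)
      (n := n * ∑ i ∈ range (r + 1), p ^ i) (k := k * ∑ i ∈ range (r + 1), p ^ i)
    have hp : 0 < p := hn.pos
    simp only [hdigits, Nat.add_mul_mod_self_left, Nat.add_mul_div_left _ _ hp,
      Nat.mod_eq_of_lt hn, Nat.mod_eq_of_lt hk, Nat.div_eq_of_lt hn, Nat.div_eq_of_lt hk,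
      zero_add] at hlucas ⊢
    rw [pow_succ']
    exact hlucas.trans (ih.mul_left _)

lemma not_dvd_choose_of_prime_pow_eq {p r m : ℕ} (hp : p.Prime) (hp1 : p % 4 = 1)
    (hm : p ^ r = 4 * m + 1) : ¬ p ∣ (2 * m).choose m := by
  have : Fact p.Prime := ⟨hp⟩
  obtain ⟨n, hn⟩ : ∃ n, p = 4 * n + 1 := ⟨p / 4, by omega⟩
  have hmn : m = n * ∑ i ∈ range r, p ^ i := by
    have h := geom_sum_mul_add (4 * n) r
    rw [← hn, hm] at h
    linarith
  have hmod := choose_mul_geomSum_modEq (p := p) (n := 2 * n) (k := n) (by omega) (by omega) r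
  rw [mul_assoc, ← hmn] at hmod
  rw [hmod.dvd_iff dvd_rfl]
  intro h
  exact hp.coprime_iff_not_dvd.mp (hp.coprime_choose_of_lt (by omega) (by omega))
    (hp.dvd_of_dvd_pow h)

end Binomial

section PowerSums

open Finset Polynomial

variable {F : Type*} [Field F] [Fintype F]

lemma sum_pow_eq_ite {j : ℕ} (hj : j ≠ 0) :
    ∑ x : F, x ^ j = if Fintype.card F - 1 ∣ j then -1 else 0 := by
  classical
  rw [← FiniteField.sum_pow_units F j, Fintype.sum_eq_add_sum_compl 0, zero_pow hj, zero_add,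
    Fintype.sum_equiv unitsEquivNeZero (fun x : Fˣ => (x : F) ^ j) (fun x => (x : F) ^ j)
      fun _ => rfl]
  exact sum_subtype _ (fun x => by rw [mem_compl, mem_singleton]) _

lemma sum_pow_of_lt_two_mul_card_sub_one {j : ℕ} (hj : j < 2 * (Fintype.card F - 1)) :
    ∑ x : F, x ^ j = if j = Fintype.card F - 1 then -1 else 0 := by
  rcases lt_or_ge j (Fintype.card F - 1) with hlt | hge
  · rw [FiniteField.sum_pow_lt_card_sub_one F j hlt, if_neg hlt.ne]
  · have hq : 0 < Fintype.card F - 1 := Nat.sub_pos_of_lt Fintype.one_lt_card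
    have hdvd : Fintype.card F - 1 ∣ j ↔ j = Fintype.card F - 1 := by
      refine ⟨?_, fun h => h ▸ dvd_rfl⟩
      rintro ⟨k, rfl⟩
      have : k < 2 := by nlinarith
      have : 1 ≤ k := by nlinarith
      rw [show k = 1 by omega, mul_one]
    simp only [sum_pow_eq_ite (hq.trans_le hge).ne', hdvd]

lemma sum_eval_eq_neg_coeff {P : F[X]} (hP : P.natDegree < 2 * (Fintype.card F - 1)) :
    ∑ x : F, P.eval x = -P.coeff (Fintype.card F - 1) := by
  simp_rw [eval_eq_sum_range' hP]
  rw [sum_comm]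
  simp_rw [← mul_sum]
  rw [sum_congr rfl fun j hj => by rw [sum_pow_of_lt_two_mul_card_sub_one (mem_range.mp hj)]]
  have : 0 < Fintype.card F - 1 := Nat.sub_pos_of_lt Fintype.one_lt_card
  rw [sum_eq_single_of_mem (Fintype.card F - 1) (mem_range.mpr (by omega))
    (fun j _ hj => by rw [if_neg hj, mul_zero]), if_pos rfl, mul_neg_one]

lemma coeff_X_sub_X_pow_three_pow (R : Type*) [CommRing R] (m : ℕ) :
    ((X - X ^ 3 : R[X]) ^ (2 * m)).coeff (4 * m) = (-1) ^ m * ((2 * m).choose m : R) := by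
  have hfactor : (X - X ^ 3 : R[X]) ^ (2 * m) =
      expand R 2 ((X + C (-1)) ^ (2 * m)) * X ^ (2 * m) := by
    rw [← (even_two_mul m).neg_pow, map_pow, map_add, expand_X, expand_C, ← mul_pow]
    congr 1
    rw [C_neg, C_1]; ring
  rw [hfactor, show 4 * m = m * 2 + 2 * m by ring, coeff_mul_X_pow, coeff_expand_mul two_pos,
    coeff_X_add_C_pow, two_mul, Nat.add_sub_cancel]

lemma cast_sum_quadraticChar_sub_pow_three [DecidableEq F] {m : ℕ}
    (hm : Fintype.card F = 4 * m + 1) :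
    ((∑ x : F, quadraticChar F (x - x ^ 3) : ℤ) : F) =
      -((-1) ^ m * ((2 * m).choose m : F)) := by
  have hF : ringChar F ≠ 2 := by
    intro h
    have := FiniteField.even_card_of_char_two h
    omega
  have hm0 : 0 < m := by
    have := Fintype.one_lt_card (α := F)
    omega
  have hdeg : ((X - X ^ 3 : F[X]) ^ (2 * m)).natDegree < 2 * (Fintype.card F - 1) := by
    have : ((X - X ^ 3 : F[X]) ^ (2 * m)).natDegree ≤ 6 * m := by compute_degree; omega
    omega
  calc ((∑ x : F, quadraticChar F (x - x ^ 3) : ℤ) : F)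
      = ∑ x : F, ((X - X ^ 3 : F[X]) ^ (2 * m)).eval x := by
        push_cast
        refine sum_congr rfl fun x _ => ?_
        rw [quadraticChar_eq_pow_of_char_ne_two' hF, show Fintype.card F / 2 = 2 * m by omega]
        simp
    _ = -((-1) ^ m * ((2 * m).choose m : F)) := by
        rw [sum_eval_eq_neg_coeff hdeg, show Fintype.card F - 1 = 4 * m by omega,
          coeff_X_sub_X_pow_three_pow]

end PowerSums

section QuadraticCharacter

open Finset

lemma isUnit_inv_four {F : Type*} [Field F] (hF : ringChar F ≠ 2) : IsUnit (4 : F)⁻¹ := by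
  have h2 : (2 : F) ≠ 0 := Ring.two_ne_zero hF
  rw [show (4 : F) = 2 ^ 2 by norm_num]
  exact isUnit_iff_ne_zero.mpr (inv_ne_zero (pow_ne_zero 2 h2))

variable {F R : Type*} [Field F] [CommRing R] {φ : MulChar F R}

lemma apply_eq_one_of_isSquare (hφ : φ ^ 2 = 1) {a : F} (ha : a ≠ 0) (hsq : IsSquare a) :
    φ a = 1 := by
  obtain ⟨b, rfl⟩ := hsq
  have hb : IsUnit b := isUnit_iff_ne_zero.mpr (left_ne_zero_of_mul ha)
  rw [map_mul, ← sq, ← MulChar.pow_apply' φ two_ne_zero, hφ, MulChar.one_apply hb]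

lemma ringChar_ne_two_of_orderOf_eq_two [Finite F] (hφ : orderOf φ = 2) : ringChar F ≠ 2 := by
  obtain ⟨hφ2, hφ1⟩ := orderOf_eq_prime_iff.mp hφ
  refine fun h => hφ1 (MulChar.ext fun u => ?_)
  rw [MulChar.one_apply_coe]
  exact apply_eq_one_of_isSquare hφ2 u.ne_zero (FiniteField.isSquare_of_char_two h _)

variable [IsDomain R]

lemma apply_generator_of_orderOf_eq_two (hφ : orderOf φ = 2) {g : Fˣ}
    (hg : ∀ u, u ∈ Subgroup.zpowers g) : φ g = -1 := by
  obtain ⟨hφ2, hφ1⟩ := orderOf_eq_prime_iff.mp hφ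
  have hsq : φ g ^ 2 = 1 := by rw [← MulChar.pow_apply_coe, hφ2, MulChar.one_apply_coe]
  refine (sq_eq_one_iff.mp hsq).resolve_left fun h => hφ1 ?_
  rw [MulChar.eq_iff hg, h, MulChar.one_apply_coe]

lemma eq_of_orderOf_eq_two [Finite F] {ψ : MulChar F R} (hφ : orderOf φ = 2)
    (hψ : orderOf ψ = 2) : φ = ψ := by
  obtain ⟨g, hg⟩ := IsCyclic.exists_generator (α := Fˣ)
  rw [MulChar.eq_iff hg, apply_generator_of_orderOf_eq_two hφ hg,
    apply_generator_of_orderOf_eq_two hψ hg]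

variable [Fintype F]

lemma eq_quadraticChar_of_orderOf_eq_two [DecidableEq F] (hφ : orderOf φ = 2) :
    φ = (quadraticChar F).ringHomComp (Int.castRingHom R) := by
  have hquad : orderOf (quadraticChar F) = 2 :=
    orderOf_eq_prime (quadraticChar_isQuadratic F).sq_eq_one
      (quadraticChar_ne_one (ringChar_ne_two_of_orderOf_eq_two hφ))
  obtain ⟨g, hg⟩ := IsCyclic.exists_generator (α := Fˣ)
  rw [MulChar.eq_iff hg, apply_generator_of_orderOf_eq_two hφ hg, MulChar.ringHomComp_apply,
    apply_generator_of_orderOf_eq_two hquad hg, map_neg, map_one]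

lemma card_sqrts_eq_one_add [DecidableEq F] (hφ : orderOf φ = 2) (u : F) :
    (#{x : F | x ^ 2 = u} : R) = 1 + φ u := by
  have h := quadraticChar_card_sqrts (ringChar_ne_two_of_orderOf_eq_two hφ) u
  rw [Set.toFinset_ofPred] at h
  rw [eq_quadraticChar_of_orderOf_eq_two hφ, MulChar.ringHomComp_apply, eq_intCast, add_comm]
  exact_mod_cast congrArg (Int.cast : ℤ → R) h

lemma sum_comp_sq (hφ : orderOf φ = 2) (f : F → R) :
    ∑ x, f (x ^ 2) = ∑ u, (1 + φ u) * f u := by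
  classical
  rw [← sum_fiberwise_of_maps_to (g := fun x : F => x ^ 2) fun _ _ => mem_univ _]
  refine sum_congr rfl fun u _ => ?_
  rw [sum_congr rfl fun x hx => by rw [(mem_filter.mp hx).2], sum_const, nsmul_eq_mul,
    card_sqrts_eq_one_add hφ]

lemma sum_sq_apply_mul_apply_one_sub_sq (hφ : orderOf φ = 2) (A B : MulChar F R) :
    ∑ x, (A ^ 2) x * B (1 - x ^ 2) = jacobiSum A B + jacobiSum (A * φ) B := by
  calc ∑ x, (A ^ 2) x * B (1 - x ^ 2)
      = ∑ x : F, (fun u => A u * B (1 - u)) (x ^ 2) := by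
        simp only [MulChar.pow_apply' A two_ne_zero, map_pow]
    _ = ∑ u, (A u * B (1 - u) + (A * φ) u * B (1 - u)) := by
        rw [sum_comp_sq hφ fun u => A u * B (1 - u)]
        refine sum_congr rfl fun u _ => ?_
        rw [MulChar.mul_apply]
        ring
    _ = _ := sum_add_distrib

end QuadraticCharacter

section Duplication

open Finset

variable {F R : Type*} [Field F] [Fintype F] [CommRing R] [IsDomain R] {φ : MulChar F R}

/-- Completing the square: `u * (1 - u) = (1 - t ^ 2) / 4` for `u = (1 + t) / 2`. -/
lemma jacobiSum_self_eq (hφ : orderOf φ = 2) {B : MulChar F R} (hB : B ≠ 1) :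
    jacobiSum B B = B 4⁻¹ * jacobiSum B φ := by
  have h2 : (2 : F) ≠ 0 := Ring.two_ne_zero (ringChar_ne_two_of_orderOf_eq_two hφ)
  let e : F ≃ F := (Equiv.addLeft (1 : F)).trans (Equiv.mulLeft₀ (2 : F)⁻¹ (inv_ne_zero h2))
  have he (t : F) : e t * (1 - e t) = 4⁻¹ * (1 - t ^ 2) := by
    change 2⁻¹ * (1 + t) * (1 - 2⁻¹ * (1 + t)) = 4⁻¹ * (1 - t ^ 2)
    rw [show (4 : F) = 2 * 2 by norm_num]
    field_simp
    ring
  have hsum : ∑ u : F, B (1 - u) = 0 := by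
    rw [← MulChar.sum_eq_zero_of_ne_one hB]
    exact (Equiv.subLeft (1 : F)).sum_comp B
  calc jacobiSum B B = ∑ t : F, B (e t) * B (1 - e t) :=
        (e.sum_comp fun x => B x * B (1 - x)).symm
    _ = B 4⁻¹ * ∑ t : F, B (1 - t ^ 2) := by simp only [← map_mul, he, mul_sum]
    _ = B 4⁻¹ * (∑ u, B (1 - u) + jacobiSum φ B) := by
        rw [sum_comp_sq hφ fun u => B (1 - u), jacobiSum, ← sum_add_distrib]
        simp only [add_mul, one_mul]
    _ = B 4⁻¹ * jacobiSum B φ := by rw [hsum, zero_add, jacobiSum_comm]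

/-- The case `n = 2` of the Hasse-Davenport product formula. -/
lemma gaussSum_mul_gaussSum_mul_quadratic (hφ : orderOf φ = 2) (hcard : (Fintype.card F : R) ≠ 0)
    {θ : AddChar F R} (hθ : θ ≠ 1) (B : MulChar F R) :
    gaussSum B θ * gaussSum (B * φ) θ = B 4⁻¹ * gaussSum (B ^ 2) θ * gaussSum φ θ := by
  obtain ⟨hφ2, -⟩ := orderOf_eq_prime_iff.mp hφ
  have h4 : IsUnit (4 : F)⁻¹ := isUnit_inv_four (ringChar_ne_two_of_orderOf_eq_two hφ)
  rcases eq_or_ne B 1 with rfl | hB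
  · rw [one_mul, one_pow, MulChar.one_apply h4, one_mul]
  rcases eq_or_ne (B ^ 2) 1 with hB2 | hB2
  · obtain rfl := eq_of_orderOf_eq_two (orderOf_eq_prime hB2 hB) hφ
    have hsq : IsSquare (4 : F)⁻¹ := ⟨2⁻¹, by rw [← mul_inv]; norm_num⟩
    rw [← sq, hB2, apply_eq_one_of_isSquare hB2 h4.ne_zero hsq, one_mul, mul_comm]
  · have hBφ : B * φ ≠ 1 := by
      intro h
      rw [eq_inv_of_mul_eq_one_left h, inv_pow, hφ2, inv_one] at hB2
      exact hB2 rfl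
    have hBB := jacobiSum_mul_nontrivial (χ := B) (φ := B) (sq B ▸ hB2) θ
    rw [← sq, jacobiSum_self_eq hφ hB] at hBB
    apply mul_left_cancel₀
      (gaussSum_ne_zero_of_nontrivial hcard hB (AddChar.IsPrimitive.of_ne_one hθ))
    linear_combination B 4⁻¹ * gaussSum (B ^ 2) θ * jacobiSum_mul_nontrivial hBφ θ
      - gaussSum (B * φ) θ * hBB

end Duplication

section JacobiSumMoments

open Finset

variable {F R : Type*} [Field F] [Fintype F] [CommRing R]

/-- Substitute `u = w / (1 + w)`, so that `1 - u = 1 / (1 + w)`. -/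
lemma jacobiSum_eq_sum_mul_inv_one_add (χ ψ : MulChar F R) :
    jacobiSum χ ψ = ∑ w, χ w * (χ * ψ)⁻¹ (1 + w) := by
  let e : F ≃ F := ((Equiv.addLeft 1).trans (Equiv.inv F)).trans (Equiv.subLeft 1)
  have he (w : F) : e w = 1 - (1 + w)⁻¹ := rfl
  rw [jacobiSum, ← e.sum_comp]
  refine sum_congr rfl fun w _ => ?_
  rw [he, sub_sub_cancel, MulChar.inv_apply', MulChar.mul_apply]
  rcases eq_or_ne (1 + w) 0 with hw | hw
  · simp only [hw, inv_zero, MulChar.map_zero, mul_zero]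
  · have hdiv : 1 - (1 + w)⁻¹ = w * (1 + w)⁻¹ := by field_simp; ring
    rw [hdiv, map_mul, mul_assoc]

variable [IsDomain R] [HasEnoughRootsOfUnity R (Monoid.exponent Fˣ)] [Fintype (MulChar F R)]

lemma sum_mulChar_apply [DecidableEq F] (a : F) :
    ∑ χ : MulChar F R, χ a = if a = 1 then (Fintype.card F : R) - 1 else 0 := by
  split_ifs with ha
  · have hcard : Fintype.card (MulChar F R) = Fintype.card F - 1 := by
      rw [← Nat.card_eq_fintype_card, MulChar.card_eq_card_units_of_hasEnoughRootsOfUnity F R,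
        Nat.card_eq_fintype_card, Fintype.card_units]
    simp only [ha, map_one, sum_const, card_univ, nsmul_one, hcard,
      Nat.cast_sub Fintype.card_pos, Nat.cast_one]
  · obtain ⟨χ, hχ⟩ := MulChar.exists_apply_ne_one_of_hasEnoughRootsOfUnity F R ha
    refine eq_zero_of_mul_eq_self_left hχ ?_
    simp only [mul_sum, ← MulChar.mul_apply]
    exact Equiv.sum_comp (Equiv.mulLeft χ) fun ψ : MulChar F R => ψ a

lemma sum_sq_sum_mul_apply_sq (h2 : (2 : F) ≠ 0) {f : F → R} (hf : f 0 = 0) :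
    ∑ χ : MulChar F R, (∑ w, f w * χ (w ^ 2)) ^ 2 =
      ((Fintype.card F : R) - 1) * ∑ w, f w * (f w⁻¹ + f (-w⁻¹)) := by
  classical
  have hroots {w : F} (hw : w ≠ 0) (v : F) : w ^ 2 * v ^ 2 = 1 ↔ v = w⁻¹ ∨ v = -w⁻¹ := by
    rw [← sq_eq_sq_iff_eq_or_eq_neg, inv_pow, mul_comm, mul_eq_one_iff_eq_inv₀ (pow_ne_zero 2 hw)]
  have hneg {w : F} (hw : w ≠ 0) : w⁻¹ ≠ -w⁻¹ := by
    rw [Ne, eq_neg_iff_add_eq_zero, ← two_mul]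
    exact mul_ne_zero h2 (inv_ne_zero hw)
  calc ∑ χ : MulChar F R, (∑ w, f w * χ (w ^ 2)) ^ 2
      = ∑ w, ∑ v, f w * f v * ∑ χ : MulChar F R, χ (w ^ 2 * v ^ 2) := by
        simp only [sq (∑ _, _), sum_mul_sum]
        rw [sum_comm]
        refine sum_congr rfl fun w _ => ?_
        rw [sum_comm]
        refine sum_congr rfl fun v _ => ?_
        rw [mul_sum]
        refine sum_congr rfl fun χ _ => ?_
        rw [map_mul]
        ring
    _ = ∑ w, ((Fintype.card F : R) - 1) * (f w * (f w⁻¹ + f (-w⁻¹))) := by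
        refine sum_congr rfl fun w _ => ?_
        rcases eq_or_ne w 0 with rfl | hw
        · simp only [hf, zero_mul, mul_zero, sum_const_zero]
        · simp only [sum_mulChar_apply, hroots hw, mul_ite, mul_zero]
          rw [← sum_filter, show ({v | v = w⁻¹ ∨ v = -w⁻¹} : Finset F) = {w⁻¹, -w⁻¹} by
            ext; simp, sum_pair (hneg hw)]
          ring
    _ = _ := (mul_sum _ _ _).symm

lemma sum_sq_jacobiSum_mul_sq (h2 : (2 : F) ≠ 0) (ψ : MulChar F R) :
    ∑ χ : MulChar F R, jacobiSum (ψ * χ ^ 2) (χ ^ 2)⁻¹ ^ 2 =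
      ((Fintype.card F : R) - 1) * (jacobiSum ψ ψ + ∑ w, ψ w * ψ⁻¹ (1 - w ^ 2)) := by
  let f (w : F) : R := ψ w * ψ⁻¹ (1 + w)
  have hf : f 0 = 0 := by simp only [f, MulChar.map_zero, zero_mul]
  have hJ (χ : MulChar F R) :
      jacobiSum (ψ * χ ^ 2) (χ ^ 2)⁻¹ = ∑ w, f w * χ (w ^ 2) := by
    rw [jacobiSum_eq_sum_mul_inv_one_add, mul_inv_cancel_right]
    refine sum_congr rfl fun w _ => ?_
    rw [MulChar.mul_apply, MulChar.pow_apply' χ two_ne_zero, map_pow]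
    ring
  have hinv (w : F) : f w * f w⁻¹ = ψ w * (ψ * ψ)⁻¹ (1 + w) := by
    rcases eq_or_ne w 0 with rfl | hw
    · rw [hf, MulChar.map_zero, zero_mul, zero_mul]
    · simp only [f, MulChar.inv_apply', MulChar.mul_apply, ← map_mul]
      rw [show 1 + w⁻¹ = (1 + w) * w⁻¹ by field_simp; ring, mul_inv (1 + w), inv_inv]
      congr 1
      linear_combination w * (1 + w)⁻¹ ^ 2 * mul_inv_cancel₀ hw
  have hneg (w : F) : f w * f (-w⁻¹) = ψ w * ψ⁻¹ (1 - w ^ 2) := by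
    rcases eq_or_ne w 0 with rfl | hw
    · rw [hf, MulChar.map_zero, zero_mul, zero_mul]
    · simp only [f, MulChar.inv_apply', ← map_mul]
      rw [show 1 + -w⁻¹ = (1 - w) * -w⁻¹ by field_simp; ring,
        show 1 - w ^ 2 = (1 - w) * (1 + w) by ring, mul_inv (1 - w), mul_inv (1 - w), inv_neg,
        inv_inv]
      congr 1
      linear_combination w * (1 + w)⁻¹ * (1 - w)⁻¹ * mul_inv_cancel₀ hw
  simp only [hJ, sum_sq_sum_mul_apply_sq h2 hf, mul_add, hinv, hneg, sum_add_distrib,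
    jacobiSum_eq_sum_mul_inv_one_add ψ ψ]

end JacobiSumMoments

section Hypergeometric

lemma gaussSum_mul_gaussSum_eq_mul_jacobiSum {F R : Type*} [Field F] [Fintype F] [CommRing R]
    [IsDomain R] {φ A : MulChar F R} (hφ : orderOf φ = 2) (hA : A ^ 2 ≠ 1)
    (hcard : (Fintype.card F : R) ≠ 0) {θ : AddChar F R} (hθ : θ ≠ 1) (χ : MulChar F R) :
    gaussSum (A * χ) θ * gaussSum (A * φ * χ) θ * (gaussSum χ⁻¹ θ * gaussSum (φ * χ)⁻¹ θ) =
      A 4⁻¹ * gaussSum φ θ ^ 2 * gaussSum (A ^ 2) θ *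
        jacobiSum (A ^ 2 * χ ^ 2) (χ ^ 2)⁻¹ := by
  have hφinv : φ⁻¹ = φ := inv_eq_of_mul_eq_one_left (by rw [← sq, (orderOf_eq_prime_iff.mp hφ).1])
  have hupper := gaussSum_mul_gaussSum_mul_quadratic hφ hcard hθ (A * χ)
  have hlower := gaussSum_mul_gaussSum_mul_quadratic hφ hcard hθ χ⁻¹
  have hJ := jacobiSum_mul_nontrivial (χ := A ^ 2 * χ ^ 2) (φ := (χ ^ 2)⁻¹)
    (by rwa [mul_inv_cancel_right]) θ
  rw [mul_inv_cancel_right] at hJ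
  have hfour : (A * χ) 4⁻¹ * χ⁻¹ 4⁻¹ = A 4⁻¹ := by
    rw [← MulChar.mul_apply, mul_inv_cancel_right]
  rw [mul_right_comm A φ χ, mul_inv φ χ, hφinv, mul_comm φ χ⁻¹, hupper, hlower, mul_pow, inv_pow,
    ← hfour]
  linear_combination -(A * χ) 4⁻¹ * χ⁻¹ 4⁻¹ * gaussSum φ θ ^ 2 * hJ

lemma gaussSum_quotient_eq_neg_jacobiSum {F K : Type*} [Field F] [Fintype F] [Field K]
    {φ A : MulChar F K} (hφ : orderOf φ = 2) (hA : A ^ 2 ≠ 1)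
    (hcard : (Fintype.card F : K) ≠ 0) {θ : AddChar F K} (hθ : θ ≠ 1) (χ : MulChar F K) :
    gaussSum (A * χ) θ / gaussSum A θ * (gaussSum (1 * χ)⁻¹ θ / gaussSum 1⁻¹ θ) *
        (gaussSum (A * φ * χ) θ / gaussSum (A * φ) θ *
          (gaussSum (φ * χ)⁻¹ θ / gaussSum φ⁻¹ θ)) =
      -jacobiSum (A ^ 2 * χ ^ 2) (χ ^ 2)⁻¹ := by
  have hne {B : MulChar F K} (hB : B ≠ 1) : gaussSum B θ ≠ 0 :=
    gaussSum_ne_zero_of_nontrivial hcard hB (AddChar.IsPrimitive.of_ne_one hθ)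
  have hφ1 : φ ≠ 1 := (orderOf_eq_prime_iff.mp hφ).2
  have h4 : A (4⁻¹ : F) ≠ 0 :=
    ((isUnit_inv_four (ringChar_ne_two_of_orderOf_eq_two hφ)).map A).ne_zero
  have hden : A 4⁻¹ * gaussSum φ θ ^ 2 * gaussSum (A ^ 2) θ ≠ 0 :=
    mul_ne_zero (mul_ne_zero h4 (pow_ne_zero 2 (hne hφ1))) (hne hA)
  have hone := gaussSum_mul_gaussSum_eq_mul_jacobiSum hφ hA hcard hθ 1
  rw [one_pow, inv_one, mul_one, mul_one, mul_one, mul_one, jacobiSum_comm,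
    jacobiSum_one_nontrivial hA] at hone
  rw [one_mul, inv_one, div_mul_div_comm, div_mul_div_comm, div_mul_div_comm,
    mul_mul_mul_comm, mul_mul_mul_comm (gaussSum A θ), hone,
    gaussSum_mul_gaussSum_eq_mul_jacobiSum hφ hA hcard hθ, mul_div_mul_left _ _ hden, div_neg,
    div_one]

lemma ffHyp_eq_neg_jacobiSum_add {F : Type} [Field F] [Fintype F] {θ : AddChar F ℂ} (hθ : θ ≠ 1)
    {φ A : MulChar F ℂ} (hφ : orderOf φ = 2) (hA : A ^ 2 ≠ 1) :
    ffHyp θ ![A, A * φ, A, A * φ] ![1, φ, 1, φ] 1 =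
      -(jacobiSum (A ^ 2) (A ^ 2) + jacobiSum A (A ^ 2)⁻¹ + jacobiSum (A * φ) (A ^ 2)⁻¹) := by
  classical
  let : Fintype (MulChar F ℂ) := Fintype.ofFinite _
  have h2 : (2 : F) ≠ 0 := Ring.two_ne_zero (ringChar_ne_two_of_orderOf_eq_two hφ)
  have hcard : (Fintype.card F : ℂ) ≠ 0 := Nat.cast_ne_zero.mpr Fintype.card_ne_zero
  have hcard1 : (Fintype.card F : ℂ) - 1 ≠ 0 :=
    sub_ne_zero.mpr (Nat.cast_ne_one.mpr Fintype.one_lt_card.ne')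
  have hterm (χ : MulChar F ℂ) :
      (∏ i, (gaussSum (![A, A * φ, A, A * φ] i * χ) θ / gaussSum (![A, A * φ, A, A * φ] i) θ) *
          (gaussSum (![1, φ, 1, φ] i * χ)⁻¹ θ / gaussSum (![1, φ, 1, φ] i)⁻¹ θ)) *
        χ (-1) ^ Fintype.card (Fin 4) * χ 1 =
      jacobiSum (A ^ 2 * χ ^ 2) (χ ^ 2)⁻¹ ^ 2 := by
    have hsign : χ (-1) ^ Fintype.card (Fin 4) = 1 := by
      rw [← map_pow, Fintype.card_fin, Even.neg_one_pow (by decide), map_one]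
    have hquot := gaussSum_quotient_eq_neg_jacobiSum hφ hA hcard hθ χ
    rw [hsign, map_one, mul_one, mul_one, Fin.prod_univ_four, ← neg_sq (jacobiSum _ _), ← hquot]
    simp [sq, mul_assoc]
  rw [ffHyp, Finset.sum_congr rfl fun χ _ => hterm χ, sum_sq_jacobiSum_mul_sq h2,
    sum_sq_apply_mul_apply_one_sub_sq hφ]
  field_simp
  ring

end Hypergeometric

section QuarticJacobiSum

open Finset

section Congruence

variable {F R : Type*} [Field F] [CommRing R] [IsDomain R]

lemma exists_apply_sub_one_eq_mul_sub_one [Finite F] {χ : MulChar F R} {n : ℕ} [NeZero n]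
    (hχ : χ ^ n = 1) {μ : R} (hμ : IsPrimitiveRoot μ n) {S : Subring R} (hμS : μ ∈ S) {a : F}
    (ha : a ≠ 0) : ∃ z ∈ S, χ a - 1 = z * (μ - 1) := by
  obtain ⟨k, -, hk⟩ := MulChar.exists_apply_eq_pow hχ hμ ha
  exact ⟨∑ i ∈ range k, μ ^ i, sum_mem fun i _ => pow_mem hμS i, by rw [hk, geom_sum_mul]⟩

lemma exists_jacobiSum_add_card_eq_mul [Fintype F] {χ ψ : MulChar F R} (hχ : χ ≠ 1) (hψ : ψ ≠ 1)
    {m n : ℕ} [NeZero m] [NeZero n] (hχm : χ ^ m = 1) (hψn : ψ ^ n = 1) {μ ν : R}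
    (hμ : IsPrimitiveRoot μ m) (hν : IsPrimitiveRoot ν n) {S : Subring R} (hμS : μ ∈ S)
    (hνS : ν ∈ S) :
    ∃ z ∈ S, jacobiSum χ ψ + Fintype.card F = z * ((μ - 1) * (ν - 1)) := by
  have hterm (u : F) : ∃ z ∈ S, (χ u - 1) * (ψ (1 - u) - 1) = z * ((μ - 1) * (ν - 1)) := by
    rcases eq_or_ne u 0 with rfl | hu
    · exact ⟨0, zero_mem _, by rw [sub_zero, map_one, sub_self, mul_zero, zero_mul]⟩
    rcases eq_or_ne u 1 with rfl | hu1
    · exact ⟨0, zero_mem _, by rw [map_one, sub_self, zero_mul, zero_mul]⟩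
    obtain ⟨y, hy, hχy⟩ := exists_apply_sub_one_eq_mul_sub_one hχm hμ hμS hu
    obtain ⟨z, hz, hψz⟩ :=
      exists_apply_sub_one_eq_mul_sub_one hψn hν hνS (sub_ne_zero.mpr hu1.symm)
    exact ⟨y * z, mul_mem hy hz, by rw [hχy, hψz, mul_mul_mul_comm]⟩
  choose z hz hzu using hterm
  refine ⟨∑ u, z u, sum_mem fun u _ => hz u, ?_⟩
  have hψsum : ∑ u : F, ψ (1 - u) = 0 := by
    rw [← MulChar.sum_eq_zero_of_ne_one hψ]
    exact (Equiv.subLeft (1 : F)).sum_comp ψ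
  calc jacobiSum χ ψ + Fintype.card F
      = ∑ u, (χ u - 1) * (ψ (1 - u) - 1) := by
        simp only [mul_sub, sub_mul, mul_one, one_mul, sum_sub_distrib, hψsum,
          MulChar.sum_eq_zero_of_ne_one hχ, sum_const, card_univ, nsmul_one, jacobiSum]
        ring
    _ = (∑ u, z u) * ((μ - 1) * (ν - 1)) := by rw [sum_mul, sum_congr rfl fun u _ => hzu u]

end Congruence

lemma jacobiSum_inv_inv_eq_star {F : Type*} [Field F] [Fintype F] (χ ψ : MulChar F ℂ) :
    jacobiSum χ⁻¹ ψ⁻¹ = star (jacobiSum χ ψ) := by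
  simp only [jacobiSum, star_sum, star_mul', MulChar.star_apply']

lemma orderOf_sq_of_orderOf_eq_four {M : Type*} [Monoid M] {g : M} (hg : orderOf g = 4) :
    orderOf (g ^ 2) = 2 := by
  rw [orderOf_pow_of_dvd two_ne_zero (by rw [hg]; decide), hg]

lemma mul_sq_eq_inv_of_pow_four_eq_one {G : Type*} [Group G] {g : G} (hg : g ^ 4 = 1) :
    g * g ^ 2 = g⁻¹ := by
  rw [eq_inv_iff_mul_eq_one, ← pow_succ', ← pow_succ, hg]

lemma inv_sq_of_pow_four_eq_one {G : Type*} [Group G] {g : G} (hg : g ^ 4 = 1) :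
    (g ^ 2)⁻¹ = g ^ 2 := by
  rw [inv_eq_iff_mul_eq_one, ← pow_add, hg]

variable {F : Type*} [Field F] [Fintype F] {χ₄ : MulChar F ℂ}

lemma exists_jacobiSum_quartic_quadratic_eq (hχ₄ : orderOf χ₄ = 4) :
    ∃ a b : ℤ, jacobiSum χ₄ (χ₄ ^ 2) = a + b * Complex.I ∧ Even b ∧
      4 ∣ a + b + Fintype.card F := by
  obtain ⟨hφ2, hφ1⟩ := orderOf_eq_prime_iff.mp (orderOf_sq_of_orderOf_eq_four hχ₄)
  have hχ1 : χ₄ ≠ 1 := by rintro rfl; exact hφ1 (one_pow 2)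
  obtain ⟨_, ⟨⟨c, d⟩, rfl⟩, hJ⟩ := exists_jacobiSum_add_card_eq_mul hχ1 hφ1
    (hχ₄ ▸ pow_orderOf_eq_one χ₄) hφ2 Complex.isPrimitiveRoot_I
    (IsPrimitiveRoot.neg_one 0 (by decide)) (S := GaussianInt.toComplex.range)
    ⟨⟨0, 1⟩, by simp [GaussianInt.toComplex_def']⟩ (neg_mem (one_mem _))
  refine ⟨2 * (c + d) - Fintype.card F, 2 * (d - c), ?_, even_two_mul _, d, by ring⟩
  rw [GaussianInt.toComplex_def'] at hJ
  push_cast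
  linear_combination hJ - 2 * d * Complex.I_sq

lemma star_jacobiSum_quartic_quadratic (hχ₄ : orderOf χ₄ = 4) :
    star (jacobiSum χ₄ (χ₄ ^ 2)) = jacobiSum χ₄⁻¹ (χ₄ ^ 2) := by
  rw [← jacobiSum_inv_inv_eq_star, inv_sq_of_pow_four_eq_one (hχ₄ ▸ pow_orderOf_eq_one χ₄)]

lemma jacobiSum_add_jacobiSum_inv_eq_sum (hχ₄ : orderOf χ₄ = 4) :
    jacobiSum χ₄ (χ₄ ^ 2) + jacobiSum χ₄⁻¹ (χ₄ ^ 2) = ∑ x, (χ₄ ^ 2) (x - x ^ 3) := by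
  rw [← mul_sq_eq_inv_of_pow_four_eq_one (hχ₄ ▸ pow_orderOf_eq_one χ₄),
    ← sum_sq_apply_mul_apply_one_sub_sq (orderOf_sq_of_orderOf_eq_four hχ₄)]
  refine sum_congr rfl fun x _ => ?_
  rw [← map_mul]
  congr 1
  ring

lemma jacobiSum_mul_star_eq_card {χ ψ : MulChar F ℂ} (hχ : χ ≠ 1) (hψ : ψ ≠ 1)
    (hχψ : χ * ψ ≠ 1) : jacobiSum χ ψ * star (jacobiSum χ ψ) = Fintype.card F := by
  have hchar : ringChar ℂ ≠ ringChar F := by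
    rw [ringChar.eq ℂ 0]
    exact (CharP.ringChar_ne_zero_of_finite F).symm
  rw [← jacobiSum_inv_inv_eq_star, jacobiSum_mul_jacobiSum_inv hchar hχ hψ hχψ]

lemma card_eq_sq_add_sq (hχ₄ : orderOf χ₄ = 4) {a b : ℤ}
    (hJ : jacobiSum χ₄ (χ₄ ^ 2) = a + b * Complex.I) :
    a ^ 2 + b ^ 2 = (Fintype.card F : ℤ) := by
  have hφ1 := (orderOf_eq_prime_iff.mp (orderOf_sq_of_orderOf_eq_four hχ₄)).2
  have hχ1 : χ₄ ≠ 1 := by rintro rfl; exact hφ1 (one_pow 2)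
  have hχφ : χ₄ * χ₄ ^ 2 ≠ 1 := by
    rwa [mul_sq_eq_inv_of_pow_four_eq_one (hχ₄ ▸ pow_orderOf_eq_one χ₄), inv_ne_one]
  have h := jacobiSum_mul_star_eq_card hχ1 hφ1 hχφ
  rw [hJ, Complex.star_def, map_add, map_mul, Complex.conj_I, map_intCast,
    map_intCast] at h
  have hC : (a : ℂ) ^ 2 + b ^ 2 = Fintype.card F := by
    linear_combination h + b ^ 2 * Complex.I_sq
  exact_mod_cast hC

lemma jacobiSum_add_star_eq_two_mul {a b : ℤ}
    (hJ : jacobiSum χ₄ (χ₄ ^ 2) = a + b * Complex.I) :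
    jacobiSum χ₄ (χ₄ ^ 2) + star (jacobiSum χ₄ (χ₄ ^ 2)) = 2 * a := by
  rw [hJ, Complex.star_def, map_add, map_mul, Complex.conj_I, map_intCast,
    map_intCast]
  ring

lemma sum_quadraticChar_eq_two_mul [DecidableEq F] (hχ₄ : orderOf χ₄ = 4) {a b : ℤ}
    (hJ : jacobiSum χ₄ (χ₄ ^ 2) = a + b * Complex.I) :
    ∑ x : F, quadraticChar F (x - x ^ 3) = 2 * a := by
  have h := jacobiSum_add_star_eq_two_mul hJ
  rw [star_jacobiSum_quartic_quadratic hχ₄, jacobiSum_add_jacobiSum_inv_eq_sum hχ₄,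
    eq_quadraticChar_of_orderOf_eq_two (orderOf_sq_of_orderOf_eq_four hχ₄)] at h
  simp only [MulChar.ringHomComp_apply, eq_intCast] at h
  exact_mod_cast h

lemma not_dvd_of_jacobiSum_quartic_quadratic_eq {p r : ℕ} (hp : p.Prime) (hp1 : p % 4 = 1)
    (hcard : Fintype.card F = p ^ r) (hχ₄ : orderOf χ₄ = 4) {a b : ℤ}
    (hJ : jacobiSum χ₄ (χ₄ ^ 2) = a + b * Complex.I) : ¬ (p : ℤ) ∣ a := by
  classical
  have : Fact p.Prime := ⟨hp⟩
  have : CharP F p := charP_of_card_eq_prime_pow hcard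
  obtain ⟨m, hm⟩ : ∃ m, p ^ r = 4 * m + 1 := by
    have h : p ^ r % 4 = 1 := by rw [Nat.pow_mod, hp1, one_pow, Nat.one_mod]
    exact ⟨p ^ r / 4, by omega⟩
  intro hpa
  have hsum := cast_sum_quadraticChar_sub_pow_three (hcard.trans hm)
  rw [sum_quadraticChar_eq_two_mul hχ₄ hJ, (CharP.intCast_eq_zero_iff F p _).mpr (hpa.mul_left 2),
    zero_eq_neg] at hsum
  refine not_dvd_choose_of_prime_pow_eq hp hp1 hm ((CharP.cast_eq_zero_iff F p _).mp ?_)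
  exact (mul_eq_zero.mp hsum).resolve_left (pow_ne_zero m (neg_ne_zero.mpr one_ne_zero))

lemma ffHyp_quartic_eq {F : Type} [Field F] [Fintype F] {χ₄ : MulChar F ℂ} (hχ₄ : orderOf χ₄ = 4)
    {θ : AddChar F ℂ} (hθ : θ ≠ 1) :
    ffHyp θ ![χ₄, χ₄ ^ 3, χ₄, χ₄ ^ 3] ![1, χ₄ ^ 2, 1, χ₄ ^ 2] 1 =
      1 - (jacobiSum χ₄ (χ₄ ^ 2) + star (jacobiSum χ₄ (χ₄ ^ 2))) := by
  have hφ := orderOf_sq_of_orderOf_eq_four hχ₄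
  have hφ1 := (orderOf_eq_prime_iff.mp hφ).2
  have hχ4 : χ₄ ^ 4 = 1 := hχ₄ ▸ pow_orderOf_eq_one χ₄
  have hJφφ : jacobiSum (χ₄ ^ 2) (χ₄ ^ 2) = -1 := by
    have h := jacobiSum_nontrivial_inv hφ1
    rwa [inv_sq_of_pow_four_eq_one hχ4, MulChar.pow_apply' χ₄ two_ne_zero, ← map_pow, neg_one_sq,
      map_one] at h
  rw [pow_succ' χ₄ 2, ffHyp_eq_neg_jacobiSum_add hθ hφ hφ1, inv_sq_of_pow_four_eq_one hχ4,
    mul_sq_eq_inv_of_pow_four_eq_one hχ4, hJφφ, star_jacobiSum_quartic_quadratic hχ₄]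
  ring

end QuarticJacobiSum

theorem stmt16 {F : Type} [Field F] [Fintype F]
    (p r : ℕ) (hp : p.Prime) (hp2 : Odd p) (hr : 0 < r)
    (hcard : Fintype.card F = p ^ r) (hq4 : Fintype.card F % 4 = 1)
    (θ : AddChar F ℂ) (hθ : θ ≠ 1)
    (φ : MulChar F ℂ) (hφ : orderOf φ = 2)
    (χ₄ : MulChar F ℂ) (hχ₄ : orderOf χ₄ = 4)
    (x y : ℤ) (hxy : (Fintype.card F : ℤ) = x ^ 2 + y ^ 2)
    (hx4 : x ≡ 1 [ZMOD 4]) (hpx : p % 4 = 1 → ¬ ((p : ℤ) ∣ x)) :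
    (Fintype.card F % 8 = 1 →
      ffHyp θ ![χ₄, χ₄ ^ 3, χ₄, χ₄ ^ 3] ![1, φ, 1, φ] 1 = 1 + 2 * (x : ℂ)) ∧
    (Fintype.card F % 8 = 5 →
      ffHyp θ ![χ₄, χ₄ ^ 3, χ₄, χ₄ ^ 3] ![1, φ, 1, φ] 1 = 1 - 2 * (x : ℂ)) := by
  obtain rfl : φ = χ₄ ^ 2 := eq_of_orderOf_eq_two hφ (orderOf_sq_of_orderOf_eq_four hχ₄)
  obtain ⟨a, b, hJ, hb, hdvd⟩ := exists_jacobiSum_quartic_quadratic_eq hχ₄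
  have hab := card_eq_sq_add_sq hχ₄ hJ
  have ha : Odd a := by obtain ⟨k, rfl⟩ := hb; rw [Int.odd_iff]; omega
  have hx : Odd x := Int.odd_iff.mpr (hx4.of_dvd (by norm_num) : x ≡ 1 [ZMOD 2])
  have hpa (hp1 : p % 4 = 1) : ¬ (p : ℤ) ∣ a :=
    not_dvd_of_jacobiSum_quartic_quadratic_eq hp hp1 hcard hχ₄ hJ
  have hax : a ^ 2 = x ^ 2 := sq_eq_sq_of_sq_add_sq_eq_odd_prime_pow hp hp2 hr.ne'
    (by exact_mod_cast hcard ▸ hab) (by exact_mod_cast hcard ▸ hxy.symm) ha hx hpa hpx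
  rw [ffHyp_quartic_eq hχ₄ hθ, jacobiSum_add_star_eq_two_mul hJ]
  refine ⟨fun hq => ?_, fun hq => ?_⟩
  · rw [eq_neg_of_sq_add_sq_emod_eight_eq_one hab hb hdvd hax hx4 (by omega)]
    push_cast
    ring
  · rw [eq_of_sq_add_sq_emod_eight_eq_five hab hb hdvd hax hx4 (by omega)]
end
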